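/- If a dynamical system (X,T) satisfies the specification property, then it is saturated; that is, for every T-invariant Borel probability measure μ on X, the Bowen topological entropy of the set G_μ of μ-generic points equals the measure-theoretic entropy h_μ of μ. -/

import Mathlib

open MeasureTheory Filter Topology Set
open scoped ENNReal NNReal

/-!  General definitions: Bowen topological entropy (via covers by Bowen balls),
measure-theoretic (Kolmogorov–Sinai) entropy, generic points, saturated systems,
and the specification property. -/

variable {X : Type*}

/-- The Bowen ball of center `x`, order `n`, radius `ε` (for the metric
`d_n(x,y) = max_{0 ≤ j < n} d(T^j x, T^j y)`). -/
def bowenBall [PseudoMetricSpace X] (T : X → X) (x : X) (n : ℕ) (ε : ℝ) : Set X :=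
  {y | ∀ j < n, dist (T^[j] x) (T^[j] y) < ε}

/-- `H_n^s(Z,ε)`: infimum of `Σ_i exp(-s n_i)` over countable covers of `Z` by Bowen balls
`B_{n_i}(x_i,ε)` with all `n_i ≥ n`. -/
noncomputable def bowenH [PseudoMetricSpace X] (T : X → X) (Z : Set X) (s ε : ℝ) (n : ℕ) :
    ℝ≥0∞ :=
  ⨅ (C : Set (X × ℕ)) (_ : C.Countable) (_ : ∀ p ∈ C, n ≤ p.2)
    (_ : Z ⊆ ⋃ p ∈ C, bowenBall T p.1 p.2 ε),
    ∑' p : C, ENNReal.ofReal (Real.exp (-s * ((p : X × ℕ).2 : ℝ)))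

/-- `h_top(Z,ε)`: the critical exponent of `s ↦ H^s(Z,ε) = sup_n H_n^s(Z,ε)`. -/
noncomputable def bowenEntropyRes [PseudoMetricSpace X] (T : X → X) (Z : Set X) (ε : ℝ) :
    ℝ≥0∞ :=
  sInf ((fun s : ℝ≥0 => (s : ℝ≥0∞)) '' {s : ℝ≥0 | (⨆ n, bowenH T Z (s : ℝ) ε n) = 0})

/-- Bowen topological entropy of a subset `Z`: `h_top(Z) = lim_{ε → 0} h_top(Z,ε)`
(the limit being a supremum by monotonicity in `ε`). -/
noncomputable def bowenEntropy [PseudoMetricSpace X] (T : X → X) (Z : Set X) : ℝ≥0∞ :=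
  ⨆ (ε : ℝ) (_ : 0 < ε), bowenEntropyRes T Z ε

/-- Entropy of the partition `P ∨ T⁻¹P ∨ ⋯ ∨ T⁻⁽ⁿ⁻¹⁾P`, where a countable partition is
encoded as a function `P : X → ℕ`: it is the Shannon entropy of the map
`x ↦ (P x, P (T x), …, P (Tⁿ⁻¹ x))`. -/
noncomputable def partInfo [MeasurableSpace X] (T : X → X) (μ : Measure X) (P : X → ℕ)
    (n : ℕ) : ℝ≥0∞ :=
  ∑' l : List ℕ, ENNReal.ofReal (Real.negMulLog
    ((μ ((fun x => (List.range n).map fun j => P (T^[j] x)) ⁻¹' {l})).toReal))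

/-- Measure-theoretic (Kolmogorov–Sinai) entropy `h_μ(T)`: supremum over finite measurable
partitions `P` of `lim_n (1/n) H_μ(P ∨ T⁻¹P ∨ ⋯ ∨ T⁻⁽ⁿ⁻¹⁾P)` (the limit exists by
subadditivity, so it may be written as a `liminf`). -/
noncomputable def ksEntropy [MeasurableSpace X] (T : X → X) (μ : Measure X) : ℝ≥0∞ :=
  ⨆ (P : X → ℕ) (_ : Measurable P) (_ : (Set.range P).Finite),
    Filter.atTop.liminf fun n : ℕ => partInfo T μ P n / (n : ℝ≥0∞)

/-- `x` is a generic point for `μ` : the empirical measures `(1/n) Σ_{j<n} δ_{T^j x}`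
converge to `μ` in the weak-star topology, i.e. Birkhoff averages of every continuous
function converge to its integral. -/
def IsGeneric [TopologicalSpace X] [MeasurableSpace X] (T : X → X) (μ : Measure X)
    (x : X) : Prop :=
  ∀ f : C(X, ℝ), Tendsto (fun n : ℕ => (∑ j ∈ Finset.range n, f (T^[j] x)) / (n : ℝ))
    atTop (𝓝 (∫ y, f y ∂μ))

/-- `μ ∈ V(x)` : `μ` is a weak-star limit point of the empirical measures of `x`. -/
def IsLimitMeasure [TopologicalSpace X] [MeasurableSpace X] (T : X → X) (x : X)
    (μ : Measure X) : Prop :=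
  ∃ φ : ℕ → ℕ, StrictMono φ ∧ ∀ f : C(X, ℝ),
    Tendsto (fun m : ℕ => (∑ j ∈ Finset.range (φ m), f (T^[j] x)) / (φ m : ℝ))
      atTop (𝓝 (∫ y, f y ∂μ))

/-- A system is saturated if `h_top(G_μ) = h_μ` for every invariant Borel probability
measure `μ`. -/
def Saturated [PseudoMetricSpace X] [MeasurableSpace X] (T : X → X) : Prop :=
  ∀ μ : Measure X, IsProbabilityMeasure μ → MeasurePreserving T μ μ →
    bowenEntropy T {x | IsGeneric T μ x} = ksEntropy T μ

/-- The specification property. -/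
def SpecificationProperty [PseudoMetricSpace X] (T : X → X) : Prop :=
  ∀ ε : ℝ, 0 < ε → ∃ m : ℕ, 1 ≤ m ∧
    ∀ k : ℕ, 2 ≤ k → ∀ x : ℕ → X, ∀ a b : ℕ → ℕ,
      (∀ i < k, a i ≤ b i) →
      (∀ i, i + 1 < k → b i + m ≤ a (i + 1)) →
      ∃ y : X, ∀ i < k, ∀ n ≤ b i - a i,
        dist (T^[a i + n] y) (T^[n] (x i)) < ε

/-- The itinerary of length `m` of a point with respect to a finite partition. -/
def word {K : ℕ} (T : X → X) (P : X → Fin K) (m : ℕ) (x : X) : Fin m → Fin K :=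
  fun j => P (T^[j] x)

lemma measurable_word [MeasurableSpace X] {K : ℕ} {T : X → X} (hT : Measurable T)
    {P : X → Fin K} (hP : Measurable P) (m : ℕ) : Measurable (word T P m) :=
  measurable_pi_lambda _ fun j => hP.comp (hT.iterate j)

lemma partInfo_eq_sum_word [MeasurableSpace X] {K : ℕ} (T : X → X) (μ : Measure X)
    [IsProbabilityMeasure μ] (P : X → Fin K) (m : ℕ) :
    partInfo T μ (fun x => (P x : ℕ)) m =
      ENNReal.ofReal (∑ w : Fin m → Fin K, Real.negMulLog (μ.real (word T P m ⁻¹' {w}))) := by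
  have hg : Function.Injective
      (fun w : Fin m → Fin K => List.ofFn (fun j => (w j : ℕ))) := by
    intro w w' h
    have := List.ofFn_injective h
    funext j
    exact Fin.ext (congrFun this j)
  have hword : ∀ x, ((List.range m).map fun j => (P (T^[j] x) : ℕ)) =
      List.ofFn (fun j => (word T P m x j : ℕ)) := by
    intro x
    apply List.ext_getElem <;> simp [word]
  unfold partInfo
  rw [← hg.tsum_eq]
  · rw [tsum_fintype, ENNReal.ofReal_sum_of_nonneg]
    · refine Finset.sum_congr rfl fun w _ => ?_
      congr 3
      simp only [hword]
      congr 1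
      ext x
      simp only [mem_preimage, mem_singleton_iff]
      exact ⟨fun h => hg h, fun h => by rw [h]⟩
    · intro w _
      exact Real.negMulLog_nonneg measureReal_nonneg measureReal_le_one
  · intro l hl
    by_contra hne
    apply hl
    have : ((fun x => (List.range m).map fun j => (P (T^[j] x) : ℕ)) ⁻¹' {l}) = ∅ := by
      ext x
      simp only [mem_preimage, mem_singleton_iff, mem_empty_iff_false, iff_false]
      intro h
      exact hne ⟨word T P m x, by rw [← h, hword]⟩
    show ENNReal.ofReal (Real.negMulLog
      ((μ ((fun x => (List.range m).map fun j => (P (T^[j] x) : ℕ)) ⁻¹' {l})).toReal)) = 0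
    rw [this]
    simp

lemma measure_frontier_inter_eq_zero [TopologicalSpace X] [MeasurableSpace X] {μ : Measure X}
    {s t : Set X} (hs : μ (frontier s) = 0) (ht : μ (frontier t) = 0) :
    μ (frontier (s ∩ t)) = 0 :=
  measure_mono_null ((frontier_inter_subset s t).trans
    (union_subset_union inter_subset_left inter_subset_right)) (measure_union_null hs ht)

lemma measure_frontier_biInter_eq_zero [TopologicalSpace X] [MeasurableSpace X] {μ : Measure X}
    {ι : Type*} (s : Finset ι) (A : ι → Set X) (hA : ∀ i ∈ s, μ (frontier (A i)) = 0) :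
    μ (frontier (⋂ i ∈ s, A i)) = 0 := by
  classical
  induction s using Finset.induction_on with
  | empty => simp
  | insert a s has ih =>
    rw [Finset.set_biInter_insert]
    exact measure_frontier_inter_eq_zero (hA a (Finset.mem_insert_self a s))
      (ih fun i hi => hA i (Finset.mem_insert_of_mem hi))

/-- A compact metric space has finite partitions of small diameter whose pieces have null
frontier. -/
lemma exists_partition_null_frontier [MetricSpace X] [CompactSpace X] [MeasurableSpace X]
    [BorelSpace X] (μ : Measure X) [IsProbabilityMeasure μ] {ε : ℝ} (hε : 0 < ε) :
    ∃ (K : ℕ) (P : X → Fin K), Measurable P ∧ (∀ x y, P x = P y → dist x y < ε) ∧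
      ∀ a, μ (frontier (P ⁻¹' {a})) = 0 := by
  classical
  have h1 : ∀ x : X, ∃ r ∈ Ioo (ε / 4) (ε / 2), μ (frontier (Metric.ball x r)) = 0 := by
    intro x
    obtain ⟨r, hr, h⟩ := exists_null_frontier_thickening μ {x} (show ε / 4 < ε / 2 by linarith)
    exact ⟨r, hr, by rwa [Metric.thickening_singleton] at h⟩
  choose r hr hr0 using h1
  obtain ⟨t, -, ht⟩ := (isCompact_univ (X := X)).elim_nhds_subcover (fun x => Metric.ball x (r x))
    (fun x _ => Metric.ball_mem_nhds x (by have := (hr x).1; linarith))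
  let e := t.equivFin
  let B : Fin t.card → Set X := fun i => Metric.ball (e.symm i : X) (r (e.symm i))
  have hB : ∀ x, ∃ i, x ∈ B i := by
    intro x
    obtain ⟨c, hc, hxc⟩ := mem_iUnion₂.1 (ht (mem_univ x))
    exact ⟨e ⟨c, hc⟩, by simpa [B] using hxc⟩
  have hB0 : ∀ i, μ (frontier (B i)) = 0 := fun i => hr0 _
  let P : X → Fin t.card := fun x => Fin.find (fun i => x ∈ B i) (hB x)
  have hpre : ∀ a, P ⁻¹' {a} = B a ∩ ⋂ i ∈ Finset.univ.filter (· < a), (B i)ᶜ := by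
    intro a
    ext x
    simp only [mem_preimage, mem_singleton_iff, mem_inter_iff, mem_iInter, Finset.mem_filter,
      Finset.mem_univ, true_and, mem_compl_iff, P]
    rw [Fin.find_eq_iff]
  refine ⟨t.card, P, ?_, ?_, ?_⟩
  · refine measurable_to_countable' fun a => ?_
    rw [hpre]
    refine Metric.isOpen_ball.measurableSet.inter ?_
    exact Finset.measurableSet_biInter _ fun i _ => Metric.isOpen_ball.measurableSet.compl
  · intro x y hxy
    have hx : x ∈ B (P x) := Fin.find_spec (hB x)
    have hy : y ∈ B (P x) := by rw [hxy]; exact Fin.find_spec (hB y)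
    have h2 := (hr (e.symm (P x))).2
    have hx' := Metric.mem_ball.1 hx
    have hy' := Metric.mem_ball.1 hy
    have := dist_triangle_right x y (e.symm (P x) : X)
    linarith
  · intro a
    rw [hpre]
    refine measure_frontier_inter_eq_zero (hB0 a) ?_
    exact measure_frontier_biInter_eq_zero _ _ fun i _ => by rw [frontier_compl]; exact hB0 i

lemma measure_frontier_word_eq_zero [TopologicalSpace X] [MeasurableSpace X] [BorelSpace X]
    {T : X → X} (hT : Continuous T) {μ : Measure X} (hμ : MeasurePreserving T μ μ) {K : ℕ}
    {P : X → Fin K} (hP : ∀ a, μ (frontier (P ⁻¹' {a})) = 0) {m : ℕ} (w : Fin m → Fin K) :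
    μ (frontier (word T P m ⁻¹' {w})) = 0 := by
  have h : word T P m ⁻¹' {w} =
      ⋂ j ∈ (Finset.univ : Finset (Fin m)), T^[j] ⁻¹' (P ⁻¹' {w j}) := by
    ext x
    simp [word, funext_iff]
  rw [h]
  refine measure_frontier_biInter_eq_zero _ _ fun j _ => ?_
  refine measure_mono_null ((hT.iterate j).frontier_preimage_subset _) ?_
  rw [(hμ.iterate j).measure_preimage isClosed_frontier.measurableSet.nullMeasurableSet]
  exact hP _

lemma IsGeneric.tendsto_indicator [MetricSpace X] [CompactSpace X] [MeasurableSpace X]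
    [BorelSpace X] {T : X → X} {μ : Measure X} [IsProbabilityMeasure μ] {x : X}
    (hx : IsGeneric T μ x) {s : Set X} (hs : MeasurableSet s) (hs0 : μ (frontier s) = 0) :
    Tendsto (fun n : ℕ => (∑ j ∈ Finset.range n, s.indicator (1 : X → ℝ) (T^[j] x)) / (n : ℝ))
      atTop (𝓝 (μ.real s)) := by
  let E : ℕ → Measure X := fun n =>
    ((n + 1 : ℕ) : ℝ≥0∞)⁻¹ • ∑ j ∈ Finset.range (n + 1), Measure.dirac (T^[j] x)
  have hE : ∀ n, IsProbabilityMeasure (E n) := by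
    intro n
    constructor
    simp only [E, Measure.smul_apply, Measure.finsetSum_apply, smul_eq_mul]
    simp only [measure_univ, Finset.sum_const, Finset.card_range, nsmul_eq_mul, mul_one]
    exact ENNReal.inv_mul_cancel (by simp) (by finiteness)
  have h_int : ∀ n (f : X → ℝ), Measurable f → ∫ y, f y ∂(E n) =
      (∑ j ∈ Finset.range (n + 1), f (T^[j] x)) / ((n + 1 : ℕ) : ℝ) := by
    intro n f hf
    simp only [E]
    rw [integral_smul_measure, integral_finsetSum_measure]
    · simp only [integral_dirac]
      rw [div_eq_inv_mul, ENNReal.toReal_inv, ENNReal.toReal_natCast, smul_eq_mul]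
    · intro i _
      exact integrable_dirac (by finiteness)
  let Ep : ℕ → ProbabilityMeasure X := fun n => ⟨E n, hE n⟩
  let μp : ProbabilityMeasure X := ⟨μ, inferInstance⟩
  have hlim : Tendsto Ep atTop (𝓝 μp) := by
    rw [ProbabilityMeasure.tendsto_iff_forall_integral_tendsto]
    intro f
    have := (hx f.toContinuousMap).comp (tendsto_add_atTop_nat 1)
    refine this.congr fun n => ?_
    exact (h_int n f f.continuous.measurable).symm
  have h1 := ProbabilityMeasure.tendsto_measure_of_null_frontier_of_tendsto' hlim
    (E := s) (by exact hs0)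
  have h2 : Tendsto (fun n => (E n).real s) atTop (𝓝 (μ.real s)) :=
    (ENNReal.tendsto_toReal (by finiteness)).comp h1
  rw [← tendsto_add_atTop_iff_nat 1]
  refine h2.congr fun n => ?_
  rw [← h_int n _ (measurable_one.indicator hs), integral_indicator_one hs]

lemma IsGeneric.tendsto_word [MetricSpace X] [CompactSpace X] [MeasurableSpace X]
    [BorelSpace X] {T : X → X} (hT : Continuous T) {μ : Measure X} [IsProbabilityMeasure μ]
    (hμ : MeasurePreserving T μ μ) {K : ℕ} {P : X → Fin K} (hPm : Measurable P)
    (hP : ∀ a, μ (frontier (P ⁻¹' {a})) = 0) {m : ℕ} (c : (Fin m → Fin K) → ℝ) {x : X}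
    (hx : IsGeneric T μ x) :
    Tendsto (fun n : ℕ => (∑ j ∈ Finset.range n, c (word T P m (T^[j] x))) / (n : ℝ))
      atTop (𝓝 (∑ w, c w * μ.real (word T P m ⁻¹' {w}))) := by
  have h : ∀ w ∈ (Finset.univ : Finset (Fin m → Fin K)), Tendsto (fun n : ℕ => c w *
      ((∑ j ∈ Finset.range n, (word T P m ⁻¹' {w}).indicator (1 : X → ℝ) (T^[j] x)) / (n : ℝ)))
      atTop (𝓝 (c w * μ.real (word T P m ⁻¹' {w}))) := fun w _ =>
    (hx.tendsto_indicator (measurable_word hT.measurable hPm m (measurableSet_singleton w))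
      (measure_frontier_word_eq_zero hT hμ hP w)).const_mul _
  refine (tendsto_finsetSum _ h).congr fun n => ?_
  simp only [← mul_div_assoc]
  rw [← Finset.sum_div]
  congr 1
  simp only [Finset.mul_sum]
  rw [Finset.sum_comm]
  refine Finset.sum_congr rfl fun j _ => ?_
  rw [Finset.sum_eq_single (word T P m (T^[j] x))]
  · simp
  · intro w _ hw
    simp [indicator, hw.symm]
  · simp

/-- Exponential Chebyshev bound for the number of sequences with small additive cost. -/
lemma card_sum_le_exp {ι β : Type*} [Fintype ι] [DecidableEq ι] [Fintype β] (φ : ι → β → ℝ)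
    (c : ℝ) :
    ((Finset.univ.filter fun B : ι → β => ∑ l, φ l (B l) ≤ c).card : ℝ) ≤
      Real.exp c * ∏ l, ∑ b, Real.exp (-φ l b) := by
  classical
  rw [Fintype.prod_sum, Finset.mul_sum, ← nsmul_one, ← Finset.sum_const]
  refine (Finset.sum_le_sum fun B hB => ?_).trans
    (Finset.sum_le_sum_of_subset_of_nonneg (Finset.subset_univ _) fun B _ _ => ?_)
  · rw [← Real.exp_sum, ← Real.exp_add, Real.one_le_exp_iff]
    rw [Finset.mem_filter] at hB
    rw [Finset.sum_neg_distrib]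
    linarith [hB.2]
  · positivity

lemma bowenH_le_of_code [PseudoMetricSpace X] {T : X → X} {Z : Set X} {s ε : ℝ} {n₀ n : ℕ}
    (hn : n₀ ≤ n) {κ : Type*} (code : X → κ) (S : Finset κ) (hS : ∀ x ∈ Z, code x ∈ S)
    (hcode : ∀ x ∈ Z, ∀ y ∈ Z, code x = code y → ∀ j < n, dist (T^[j] x) (T^[j] y) < ε) :
    bowenH T Z s ε n₀ ≤ S.card * ENNReal.ofReal (Real.exp (-s * n)) := by
  classical
  rcases Z.eq_empty_or_nonempty with rfl | ⟨x₀, hx₀⟩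
  · refine (iInf_le_of_le ∅ <| iInf_le_of_le countable_empty <| iInf_le_of_le (by simp) <|
      iInf_le_of_le (by simp) ?_)
    simp
  have h1 : ∀ k : κ, ∃ x ∈ Z, (∃ y ∈ Z, code y = k) → code x = k := by
    intro k
    by_cases h : ∃ y ∈ Z, code y = k
    · obtain ⟨y, hy, hk⟩ := h
      exact ⟨y, hy, fun _ => hk⟩
    · exact ⟨x₀, hx₀, fun h' => absurd h' h⟩
  choose rep hrep hrep' using h1
  let C : Finset (X × ℕ) := S.image fun k => (rep k, n)
  have hC2 : ∀ p ∈ C, p.2 = n := by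
    intro p hp
    obtain ⟨k, -, rfl⟩ := Finset.mem_image.1 hp
    rfl
  refine iInf_le_of_le (C : Set (X × ℕ)) <| iInf_le_of_le C.countable_toSet <|
    iInf_le_of_le (fun p hp => by rw [hC2 p hp]; exact hn) <| iInf_le_of_le ?_ ?_
  · intro x hx
    refine mem_iUnion₂.2 ⟨(rep (code x), n), ?_, ?_⟩
    · exact Finset.mem_coe.2 (Finset.mem_image_of_mem _ (hS x hx))
    · exact hcode _ (hrep _) _ hx (hrep' _ ⟨x, hx, rfl⟩)
  · rw [Finset.tsum_subtype' C fun p : X × ℕ => ENNReal.ofReal (Real.exp (-s * (p.2 : ℝ)))]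
    rw [Finset.sum_congr rfl (g := fun _ => ENNReal.ofReal (Real.exp (-s * n)))
      (fun p hp => by rw [hC2 p hp])]
    rw [Finset.sum_const, nsmul_eq_mul]
    gcongr
    exact Finset.card_image_le

lemma bowenH_iUnion_eq_zero [PseudoMetricSpace X] {T : X → X} {Z : ℕ → Set X} {s ε : ℝ} {n : ℕ}
    (hZ : ∀ i, bowenH T (Z i) s ε n = 0) : bowenH T (⋃ i, Z i) s ε n = 0 := by
  refine le_antisymm (ENNReal.le_of_forall_pos_le_add fun δ hδ _ => ?_) zero_le
  obtain ⟨δ', hδ', hsum⟩ := ENNReal.exists_pos_sum_of_countable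
    (ENNReal.coe_ne_zero.2 hδ.ne') ℕ
  have h : ∀ i, ∃ C : Set (X × ℕ), C.Countable ∧ (∀ p ∈ C, n ≤ p.2) ∧
      (Z i ⊆ ⋃ p ∈ C, bowenBall T p.1 p.2 ε) ∧
      ∑' p : C, ENNReal.ofReal (Real.exp (-s * ((p : X × ℕ).2 : ℝ))) < δ' i := by
    intro i
    have h0 : bowenH T (Z i) s ε n < δ' i := by
      rw [hZ i]
      exact_mod_cast hδ' i
    simp only [bowenH, iInf_lt_iff] at h0
    obtain ⟨C, h1, h2, h3, h4⟩ := h0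
    exact ⟨C, h1, h2, h3, h4⟩
  choose C hC1 hC2 hC3 hC4 using h
  rw [zero_add]
  refine iInf_le_of_le (⋃ i, C i) <| iInf_le_of_le (countable_iUnion hC1) <|
    iInf_le_of_le ?_ <| iInf_le_of_le ?_ ?_
  · intro p hp
    obtain ⟨i, hi⟩ := mem_iUnion.1 hp
    exact hC2 i p hi
  · refine iUnion_subset fun i => (hC3 i).trans ?_
    exact biUnion_subset_biUnion_left (subset_iUnion C i)
  · refine (ENNReal.tsum_iUnion_le_tsum
      (fun p : X × ℕ => ENNReal.ofReal (Real.exp (-s * (p.2 : ℝ)))) C).trans ?_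
    exact (ENNReal.tsum_le_tsum fun i => (hC4 i).le).trans hsum.le

lemma sum_range_mul_eq (g : ℕ → ℝ) (m t : ℕ) :
    ∑ i ∈ Finset.range (m * t), g i =
      ∑ l ∈ Finset.range t, ∑ r ∈ Finset.range m, g (r + m * l) := by
  induction t with
  | zero => simp
  | succ t ih =>
    rw [mul_add_one, Finset.sum_range_add, ih, Finset.sum_range_succ]
    simp [add_comm]

lemma exists_offset_sum_le {m t : ℕ} (hm : 0 < m) (g : ℕ → ℝ) {c : ℝ}
    (h : ∑ i ∈ Finset.range (m * t), g i ≤ (m * t : ℕ) * c) :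
    ∃ r < m, ∑ l : Fin t, g (r + m * l) ≤ t * c := by
  have h1 : ∑ i ∈ Finset.range (m * t), g i =
      ∑ r ∈ Finset.range m, ∑ l : Fin t, g (r + m * l) := by
    rw [sum_range_mul_eq, Finset.sum_comm]
    simp only [Finset.sum_range]
  rw [h1] at h
  obtain ⟨r, hr, h2⟩ := Finset.exists_le_of_sum_le (s := Finset.range m)
    (g := fun _ => (t : ℝ) * c) ⟨0, by simpa using hm⟩ (h.trans (by simp; linarith))
  exact ⟨r, Finset.mem_range.1 hr, h2⟩

lemma bowenH_le_of_sum_word_le [MetricSpace X] {T : X → X} {Z : Set X} {s ε : ℝ} {n₀ N K m t : ℕ}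
    {P : X → Fin K} (hP : ∀ x y, P x = P y → dist x y < ε) (hm : 0 < m)
    (φ : (Fin m → Fin K) → ℝ) {c : ℝ}
    (hZ : ∀ x ∈ Z, ∀ n ≥ N, ∑ j ∈ Finset.range n, φ (word T P m (T^[j] x)) ≤ n * c)
    (hn₀ : n₀ ≤ m * t) (hN : N ≤ m * t) :
    bowenH T Z s ε n₀ ≤ ENNReal.ofReal (m * (K ^ m : ℕ) *
      (Real.exp c * (∑ w, Real.exp (-φ w)) * Real.exp (-s * m)) ^ t) := by
  classical
  have h1 : ∀ x : X, ∃ r : Fin m, x ∈ Z →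
      ∑ l : Fin t, φ (word T P m (T^[r + m * l] x)) ≤ t * c := by
    intro x
    by_cases hx : x ∈ Z
    · obtain ⟨r, hr, h⟩ := exists_offset_sum_le hm (fun j => φ (word T P m (T^[j] x)))
        (hZ x hx _ hN)
      exact ⟨⟨r, hr⟩, fun _ => h⟩
    · exact ⟨⟨0, hm⟩, fun h => absurd h hx⟩
  choose r hr using h1
  let code : X → Fin m × (Fin m → Fin K) × (Fin t → Fin m → Fin K) := fun x =>
    (r x, word T P m x, fun l => word T P m (T^[r x + m * l] x))
  let S : Finset (Fin m × (Fin m → Fin K) × (Fin t → Fin m → Fin K)) :=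
    Finset.univ ×ˢ Finset.univ ×ˢ (Finset.univ.filter fun B => ∑ l, φ (B l) ≤ t * c)
  refine (bowenH_le_of_code hn₀ code S ?_ ?_).trans ?_
  · intro x hx
    simpa [S, code] using hr x hx
  · intro x hx y hy hxy j hj
    simp only [code, Prod.mk.injEq] at hxy
    obtain ⟨h1, h2, h3⟩ := hxy
    apply hP
    rcases lt_or_ge j (r x : ℕ) with hjr | hjr
    · exact congrFun h2 ⟨j, hjr.trans (r x).2⟩
    · have hl : (j - r x) / m < t := by
        rw [Nat.div_lt_iff_lt_mul hm]
        rw [mul_comm t m]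
        omega
      have h4 := congrFun (congrFun h3 ⟨(j - r x) / m, hl⟩) ⟨(j - r x) % m, Nat.mod_lt _ hm⟩
      simp only [word, ← Function.iterate_add_apply, ← h1] at h4
      have h5 : (j - r x) % m + (r x + m * ((j - r x) / m)) = j := by
        have := Nat.mod_add_div (j - r x) m
        omega
      rwa [h5] at h4
  · have h2 := card_sum_le_exp (fun _ : Fin t => φ) (t * c)
    rw [Finset.prod_const, Finset.card_univ, Fintype.card_fin] at h2
    rw [← ENNReal.ofReal_natCast, ← ENNReal.ofReal_mul (by positivity)]
    refine ENNReal.ofReal_le_ofReal ?_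
    simp only [S, Finset.card_product, Finset.card_univ, Fintype.card_fin, Fintype.card_pi,
      Finset.prod_const]
    rw [Nat.cast_mul, Nat.cast_mul]
    rw [← mul_assoc, mul_assoc ((m : ℝ) * ((K ^ m : ℕ) : ℝ))]
    gcongr
    refine (mul_le_mul_of_nonneg_right h2 (Real.exp_pos _).le).trans (le_of_eq ?_)
    rw [mul_pow, mul_pow, ← Real.exp_nat_mul, ← Real.exp_nat_mul]
    congr 2
    push_cast
    ring

theorem bowenEntropy_isGeneric_le [MetricSpace X] [CompactSpace X] [MeasurableSpace X]
    [BorelSpace X] {T : X → X} (hT : Continuous T) {μ : Measure X} [IsProbabilityMeasure μ]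
    (hμ : MeasurePreserving T μ μ) :
    bowenEntropy T {x | IsGeneric T μ x} ≤ ksEntropy T μ := by
  refine iSup₂_le fun ε hε => ?_
  by_contra hlt
  obtain ⟨s, hs1, hs2⟩ := ENNReal.lt_iff_exists_nnreal_btwn.1 (not_le.1 hlt)
  refine absurd hs2 (not_lt.2 (sInf_le ⟨s, ?_, rfl⟩))
  obtain ⟨K, P, hPm, hPd, hPf⟩ := exists_partition_null_frontier μ hε
  have hlim : (atTop.liminf fun n : ℕ => partInfo T μ (fun x => (P x : ℕ)) n / (n : ℝ≥0∞)) < s := by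
    refine lt_of_le_of_lt ?_ hs1
    refine le_iSup₂_of_le (fun x => (P x : ℕ)) (measurable_from_top.comp hPm) ?_
    refine le_iSup_of_le ((finite_lt_nat K).subset ?_) le_rfl
    rintro _ ⟨x, rfl⟩
    exact (P x).2
  obtain ⟨m, hm1, hm⟩ := ((frequently_lt_of_liminf_lt (by isBoundedDefault) hlim).and_eventually
    (eventually_ge_atTop 1)).exists
  rw [partInfo_eq_sum_word, ENNReal.div_lt_iff (by simp; omega) (by simp)] at hm1
  set p : (Fin m → Fin K) → ℝ := fun w => μ.real (word T P m ⁻¹' {w}) with hp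
  set H : ℝ := ∑ w, Real.negMulLog (p w) with hH
  have hHs : H < s * m := by
    have : ((s : ℝ≥0∞) * (m : ℝ≥0∞)) = ENNReal.ofReal ((s : ℝ) * m) := by
      rw [ENNReal.ofReal_mul (by positivity)]; simp
    rw [this] at hm1
    exact (ENNReal.ofReal_lt_ofReal_iff_of_nonneg (Finset.sum_nonneg fun w _ =>
      Real.negMulLog_nonneg measureReal_nonneg measureReal_le_one)).1 hm1
  set W : ℝ := (Fintype.card (Fin m → Fin K) : ℝ) with hW
  obtain ⟨θ, hθ, hθW⟩ : ∃ θ > 0, θ * W < (s * m - H) / 2 := by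
    refine ⟨(s * m - H) / 2 / (W + 1), by have : 0 ≤ W := by positivity
                                          have : 0 < s * m - H := by linarith
                                          positivity, ?_⟩
    have h0 : 0 ≤ W := by positivity
    rw [div_mul_eq_mul_div, div_lt_iff₀ (by positivity)]
    nlinarith
  let φ : (Fin m → Fin K) → ℝ := fun w => -Real.log (p w + θ)
  have hpn : ∀ w, 0 ≤ p w := fun w => measureReal_nonneg
  have hpsum : ∑ w, p w = 1 := by
    rw [sum_measureReal_preimage_singleton]
    · simp
    · intro w _
      exact measurable_word hT.measurable hPm m (measurableSet_singleton w)
  have hφ : ∑ w, φ w * p w ≤ H := by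
    refine Finset.sum_le_sum fun w _ => ?_
    rcases (hpn w).eq_or_lt with h | h
    · rw [← h]; simp
    · have : Real.log (p w) ≤ Real.log (p w + θ) := Real.log_le_log h (by linarith)
      simp only [φ, Real.negMulLog]
      nlinarith
  have hD : ∑ w, Real.exp (-φ w) = 1 + θ * W := by
    have : ∀ w, Real.exp (-φ w) = p w + θ := fun w => by
      simp only [φ, neg_neg]
      exact Real.exp_log (by have := hpn w; linarith)
    simp only [this, Finset.sum_add_distrib, hpsum, Finset.sum_const, Finset.card_univ,
      nsmul_eq_mul]
    rw [mul_comm]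
  set c : ℝ := (H + s * m) / 2 with hc
  let Z : ℕ → Set X := fun N =>
    {x | ∀ n ≥ N, ∑ j ∈ Finset.range n, φ (word T P m (T^[j] x)) ≤ n * c}
  have hG : {x | IsGeneric T μ x} ⊆ ⋃ N, Z N := by
    intro x hx
    have h1 := IsGeneric.tendsto_word hT hμ hPm hPf φ hx
    have h2 : ∑ w, φ w * p w < c := by linarith
    obtain ⟨N, hN⟩ := eventually_atTop.1 ((h1.eventually_lt_const h2).and (eventually_gt_atTop 0))
    refine mem_iUnion.2 ⟨N, fun n hn => ?_⟩
    obtain ⟨h3, h4⟩ := hN n hn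
    rw [div_lt_iff₀ (by exact_mod_cast h4)] at h3
    linarith
  have hZ : ∀ n N, bowenH T (Z N) s ε n = 0 := by
    intro n N
    set ρ : ℝ := Real.exp c * (∑ w, Real.exp (-φ w)) * Real.exp (-s * m) with hρ
    have hρ0 : 0 ≤ ρ := by positivity
    have hρ1 : ρ < 1 := by
      rw [hρ, hD]
      have : 1 + θ * W ≤ Real.exp (θ * W) := by
        rw [add_comm]; exact Real.add_one_le_exp _
      calc Real.exp c * (1 + θ * W) * Real.exp (-s * m)
          ≤ Real.exp c * Real.exp (θ * W) * Real.exp (-s * m) := by gcongr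
        _ = Real.exp (c + θ * W - s * m) := by
          rw [← Real.exp_add, ← Real.exp_add]; congr 1; ring
        _ < 1 := by rw [Real.exp_lt_one_iff]; rw [hc]; linarith
    have h1 : Tendsto (fun t : ℕ => ENNReal.ofReal (m * (K ^ m : ℕ) * ρ ^ t)) atTop (𝓝 0) := by
      have := ((tendsto_pow_atTop_nhds_zero_of_lt_one hρ0 hρ1).const_mul
        ((m : ℝ) * (K ^ m : ℕ)))
      rw [mul_zero] at this
      simpa using ENNReal.tendsto_ofReal this
    refine le_antisymm (ge_of_tendsto h1 ?_) zero_le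
    filter_upwards [eventually_ge_atTop (max n N)] with t ht
    have h2 : t ≤ m * t := Nat.le_mul_of_pos_left t hm
    exact bowenH_le_of_sum_word_le hPd hm φ (fun x hx => hx)
      (((le_max_left _ _).trans ht).trans h2) (((le_max_right _ _).trans ht).trans h2)
  simp only [mem_ofPred_eq, ENNReal.iSup_eq_zero]
  intro n
  refine le_antisymm ?_ zero_le
  rw [← bowenH_iUnion_eq_zero (fun N => hZ n N)]
  refine iInf_mono fun C => iInf_mono fun _ => iInf_mono fun _ => iInf_mono' fun h => ?_
  exact ⟨hG.trans h, le_rfl⟩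

/-- A finite measurable partition is locally constant at a uniform scale on a set of measure
close to one. -/
lemma exists_uniform_separation [MetricSpace X] [CompactSpace X] [MeasurableSpace X]
    [BorelSpace X] (μ : Measure X) [IsProbabilityMeasure μ] {K : ℕ} {P : X → Fin K}
    (hP : Measurable P) {κ : ℝ} (hκ : 0 < κ) :
    ∃ U : Set X, MeasurableSet U ∧ μ.real Uᶜ ≤ κ ∧
      ∃ ε > 0, ∀ x ∈ U, ∀ y ∈ U, dist x y < ε → P x = P y := by
  classical
  have h1 : ∀ a : Fin K, ∃ F ⊆ P ⁻¹' {a}, IsClosed F ∧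
      μ ((P ⁻¹' {a}) \ F) < ENNReal.ofReal (κ / (K + 1)) := fun a =>
    (hP (measurableSet_singleton a)).exists_isClosed_sdiff_lt (by finiteness)
      (by simpa using by positivity)
  choose F hFP hFc hF using h1
  have h2 : ∀ p : Fin K × Fin K, ∃ ε > 0, p.1 ≠ p.2 → ∀ x ∈ F p.1, ∀ y ∈ F p.2, ε ≤ dist x y := by
    rintro ⟨a, b⟩
    by_cases hab : a = b
    · exact ⟨1, one_pos, fun h => absurd hab h⟩
    have hd : Disjoint (F a) (F b) := by
      refine Disjoint.mono (hFP a) (hFP b) ?_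
      exact Disjoint.preimage _ (by simpa using hab)
    obtain ⟨δ, hδ, h⟩ := hd.exists_thickenings (hFc a).isCompact (hFc b)
    refine ⟨δ, hδ, fun _ x hx y hy => ?_⟩
    by_contra hlt
    refine disjoint_left.1 h (Metric.mem_thickening_iff.2 ⟨x, hx, ?_⟩)
      (Metric.self_subset_thickening hδ _ hy)
    rw [dist_comm]
    exact not_le.1 hlt
  choose e he hesep using h2
  refine ⟨⋃ a, F a, (isClosed_iUnion_of_finite hFc).measurableSet, ?_, ?_⟩
  · have hsub : (⋃ a, F a)ᶜ ⊆ ⋃ a, (P ⁻¹' {a}) \ F a := by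
      intro x hx
      refine mem_iUnion.2 ⟨P x, rfl, fun h => hx (mem_iUnion.2 ⟨_, h⟩)⟩
    have h3 : μ (⋃ a, F a)ᶜ ≤ ENNReal.ofReal κ := by
      refine (measure_mono hsub).trans ((measure_iUnion_le _).trans ?_)
      rw [tsum_fintype]
      refine (Finset.sum_le_sum fun a _ => (hF a).le).trans ?_
      rw [← ENNReal.ofReal_sum_of_nonneg (fun _ _ => by positivity)]
      refine ENNReal.ofReal_le_ofReal ?_
      rw [Finset.sum_const, Finset.card_univ, Fintype.card_fin, nsmul_eq_mul, mul_div_assoc',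
        div_le_iff₀ (by positivity)]
      nlinarith
    exact ENNReal.toReal_le_of_le_ofReal hκ.le h3
  · obtain ⟨ε, hε, hle⟩ : ∃ ε > 0, ∀ p, ε ≤ e p := by
      rcases isEmpty_or_nonempty (Fin K × Fin K) with h | h
      · exact ⟨1, one_pos, fun p => h.elim p⟩
      · obtain ⟨p, hp⟩ := Finite.exists_min e
        exact ⟨e p, he p, hp⟩
    refine ⟨ε, hε, fun x hx y hy hxy => ?_⟩
    obtain ⟨a, ha⟩ := mem_iUnion.1 hx
    obtain ⟨b, hb⟩ := mem_iUnion.1 hy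
    rw [show P x = a from hFP a ha, show P y = b from hFP b hb]
    by_contra hab
    exact absurd hxy (not_lt.2 ((hle _).trans (hesep (a, b) hab x ha y hb)))

/-- Weak law of large numbers for finitely many functions of independent samples. -/
lemma eventually_half_le_infinitePi [MeasurableSpace X] (μ : Measure X) [IsProbabilityMeasure μ]
    {ι : Type*} [Fintype ι] (G : ι → X → ℝ) (hGm : ∀ l, Measurable (G l))
    (hG : ∀ l, Integrable (G l) μ) (τ : ι → ℝ) (hτ : ∀ l, 0 < τ l) :
    ∀ᶠ N : ℕ in atTop, 1 / 2 ≤ (Measure.infinitePi fun _ : ℕ => μ).real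
      {ω | ∀ l, |∑ i ∈ Finset.range N, G l (ω i) - N * ∫ x, G l x ∂μ| ≤ N * τ l} := by
  set ℙ := Measure.infinitePi fun _ : ℕ => μ with hℙ
  have hmp : ∀ i : ℕ, MeasurePreserving (fun ω : ℕ → X => ω i) ℙ μ := fun i =>
    measurePreserving_eval_infinitePi (fun _ : ℕ => μ) i
  have h1 : ∀ l, ∀ᵐ ω ∂ℙ, Tendsto (fun n : ℕ => (n : ℝ)⁻¹ • ∑ i ∈ Finset.range n, G l (ω i)) atTop
      (𝓝 (∫ x, G l x ∂μ)) := by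
    intro l
    have hind : ProbabilityTheory.iIndepFun (fun (i : ℕ) (ω : ℕ → X) => G l (ω i)) ℙ :=
      ProbabilityTheory.iIndepFun_infinitePi (P := fun _ : ℕ => μ) (X := fun _ => G l)
        fun _ => hGm l
    have := ProbabilityTheory.strong_law_ae (fun (i : ℕ) (ω : ℕ → X) => G l (ω i))
      ((hmp 0).integrable_comp_of_integrable (hG l)) (fun i j hij => hind.indepFun hij)
      (fun i => ⟨((hGm l).comp (measurable_pi_apply i)).aemeasurable,
        ((hGm l).comp (measurable_pi_apply 0)).aemeasurable, by
          have ha : ∀ i, Measure.map (fun ω : ℕ → X => G l (ω i)) ℙ = Measure.map (G l) μ := by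
            intro i
            rw [← (hmp i).map_eq, Measure.map_map (hGm l) (measurable_pi_apply i)]
            rfl
          rw [ha, ha]⟩)
    have h0 : ∫ ω, G l (ω 0) ∂ℙ = ∫ x, G l x ∂μ := by
      rw [← (hmp 0).map_eq, integral_map (measurable_pi_apply 0).aemeasurable
        (hGm l).aestronglyMeasurable]
    rwa [h0] at this
  have h2 : ∀ l, Tendsto (fun n : ℕ => ℙ {ω | ENNReal.ofReal (τ l) ≤
      edist ((n : ℝ)⁻¹ • ∑ i ∈ Finset.range n, G l (ω i)) (∫ x, G l x ∂μ)}) atTop (𝓝 0) := by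
    intro l
    refine tendstoInMeasure_of_tendsto_ae (fun n => ?_) (h1 l) _ (by simpa using hτ l)
    have hm : Measurable fun ω : ℕ → X => (n : ℝ)⁻¹ * ∑ i ∈ Finset.range n, G l (ω i) :=
      (Finset.measurable_sum _ fun i _ => (hGm l).comp (measurable_pi_apply i)).const_mul _
    exact hm.aestronglyMeasurable
  have h3 := tendsto_finsetSum Finset.univ fun l _ => h2 l
  rw [Finset.sum_const_zero] at h3
  filter_upwards [h3.eventually_lt_const (show (0 : ℝ≥0∞) < 1 / 2 by simp),
    eventually_gt_atTop 0] with N hN hN0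
  set S : Set (ℕ → X) :=
    {ω | ∀ l, |∑ i ∈ Finset.range N, G l (ω i) - N * ∫ x, G l x ∂μ| ≤ N * τ l} with hS
  have hN0' : (0 : ℝ) < N := by exact_mod_cast hN0
  have hSc : Sᶜ ⊆ ⋃ l, {ω | ENNReal.ofReal (τ l) ≤
      edist ((N : ℝ)⁻¹ • ∑ i ∈ Finset.range N, G l (ω i)) (∫ x, G l x ∂μ)} := by
    intro ω hω
    simp only [hS, mem_compl_iff, mem_ofPred_eq, not_forall, not_le] at hω
    obtain ⟨l, hl⟩ := hω
    refine mem_iUnion.2 ⟨l, ?_⟩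
    rw [mem_ofPred_eq, edist_dist]
    refine ENNReal.ofReal_le_ofReal ?_
    rw [Real.dist_eq]
    have : (N : ℝ)⁻¹ • ∑ i ∈ Finset.range N, G l (ω i) - ∫ x, G l x ∂μ =
        (N : ℝ)⁻¹ * (∑ i ∈ Finset.range N, G l (ω i) - N * ∫ x, G l x ∂μ) := by
      rw [smul_eq_mul]; field_simp
    rw [this, abs_mul, abs_of_pos (inv_pos.2 hN0'), le_inv_mul_iff₀ hN0']
    exact hl.le
  have hb : ℙ Sᶜ ≤ 1 / 2 := by
    refine (measure_mono hSc).trans ((measure_iUnion_le _).trans ?_)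
    rw [tsum_fintype]
    exact hN.le
  have h4 : ℙ.real Sᶜ ≤ 1 / 2 := by
    have := ENNReal.toReal_mono (by simp) hb
    simpa [measureReal_def] using this
  have h5 : (1 : ℝ) ≤ ℙ.real S + ℙ.real Sᶜ := by
    have := measureReal_union_le (μ := ℙ) S Sᶜ
    rwa [union_compl_self, probReal_univ] at this
  linarith

/-- A set of samples of probability at least one half on which the information content is large
takes many values. -/
lemma half_exp_le_card_image [MeasurableSpace X] (μ : Measure X) [IsProbabilityMeasure μ]
    {α β : Type*} [MeasurableSpace α] [MeasurableSingletonClass α] {W : X → α}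
    (hW : Measurable W) [Fintype β] [DecidableEq β] {N : ℕ} (code : (ℕ → X) → β)
    (hcode : ∀ ω ω', code ω = code ω' → ∀ i < N, W (ω i) = W (ω' i))
    {S : Set (ℕ → X)} (hS : 1 / 2 ≤ (Measure.infinitePi fun _ : ℕ => μ).real S) {c : ℝ}
    (hc : ∀ ω ∈ S, c ≤ ∑ i ∈ Finset.range N, -Real.log (μ.real (W ⁻¹' {W (ω i)})))
    (V : Finset β) (hV : ∀ ω ∈ S, code ω ∈ V) (hV' : ∀ v ∈ V, ∃ ω ∈ S, code ω = v) :
    Real.exp c / 2 ≤ V.card := by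
  classical
  set ℙ := Measure.infinitePi fun _ : ℕ => μ with hℙ
  have h1 : ∀ v ∈ V, ℙ.real {ω | code ω = v} ≤ Real.exp (-c) := by
    intro v hv
    obtain ⟨ω₀, hω₀, rfl⟩ := hV' v hv
    have hsub : {ω | code ω = code ω₀} ⊆
        ((Finset.range N : Finset ℕ) : Set ℕ).pi fun i => W ⁻¹' {W (ω₀ i)} := by
      intro ω hω i hi
      exact hcode ω ω₀ hω i (by simpa using hi)
    refine (measureReal_mono hsub).trans ?_
    rw [measureReal_def, hℙ, Measure.infinitePi_pi _ fun i _ => hW (measurableSet_singleton _),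
      ENNReal.toReal_prod]
    by_cases h0 : ∃ i ∈ Finset.range N, μ.real (W ⁻¹' {W (ω₀ i)}) = 0
    · obtain ⟨i, hi, h0⟩ := h0
      rw [Finset.prod_eq_zero hi h0]
      positivity
    · push Not at h0
      have h2 := hc ω₀ hω₀
      rw [Finset.sum_neg_distrib] at h2
      calc ∏ i ∈ Finset.range N, (μ (W ⁻¹' {W (ω₀ i)})).toReal
          = Real.exp (∑ i ∈ Finset.range N, Real.log (μ.real (W ⁻¹' {W (ω₀ i)}))) := by
            rw [Real.exp_sum]
            refine Finset.prod_congr rfl fun i hi => ?_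
            rw [Real.exp_log (lt_of_le_of_ne measureReal_nonneg (h0 i hi).symm), measureReal_def]
        _ ≤ Real.exp (-c) := Real.exp_le_exp.2 (by linarith)
  have h2 : S ⊆ ⋃ v ∈ V, {ω | code ω = v} := fun ω hω =>
    mem_iUnion₂.2 ⟨code ω, hV ω hω, rfl⟩
  have h3 : 1 / 2 ≤ (V.card : ℝ) * Real.exp (-c) := by
    refine hS.trans ((measureReal_mono h2 (measure_ne_top _ _)).trans ?_)
    refine (measureReal_biUnion_finset_le V _).trans ((Finset.sum_le_sum h1).trans ?_)
    rw [Finset.sum_const, nsmul_eq_mul]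
  rw [Real.exp_neg, ← div_eq_mul_inv, le_div_iff₀ (Real.exp_pos _)] at h3
  linarith

lemma card_hammingDist_le {ι β : Type*} [Fintype ι] [DecidableEq ι] [Fintype β] [DecidableEq β]
    (w : ι → β) (L : ℝ) (r : ℝ) (hL : 0 ≤ L) :
    ((Finset.univ.filter fun w' : ι → β => (hammingDist w w' : ℝ) ≤ r).card : ℝ) ≤
      Real.exp (L * r + Fintype.card β * Real.exp (-L) * Fintype.card ι) := by
  have h1 := card_sum_le_exp (fun l b => if w l ≠ b then L else 0) (L * r)
  have hprod : ∏ l, ∑ b, Real.exp (-(if w l ≠ b then L else 0)) ≤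
      Real.exp (Fintype.card β * Real.exp (-L) * Fintype.card ι) := by
    have h2 : ∀ l, ∑ b, Real.exp (-(if w l ≠ b then L else 0)) ≤
        Real.exp (Fintype.card β * Real.exp (-L)) := by
      intro l
      have h3 : ∀ b, Real.exp (-(if w l ≠ b then L else 0)) ≤
          (if w l = b then 1 else 0) + Real.exp (-L) := by
        intro b
        by_cases h : w l = b
        · simp [h, Real.exp_nonneg]
        · simp [h]
      refine (Finset.sum_le_sum fun b _ => h3 b).trans ?_
      rw [Finset.sum_add_distrib, Finset.sum_ite_eq]
      simp only [Finset.mem_univ, if_true, Finset.sum_const, Finset.card_univ, nsmul_eq_mul]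
      rw [add_comm]
      exact Real.add_one_le_exp _
    refine (Finset.prod_le_prod (fun l _ => by positivity) fun l _ => h2 l).trans ?_
    rw [Finset.prod_const, ← Real.exp_nat_mul, Finset.card_univ, mul_comm]
  rw [Real.exp_add]
  refine le_trans ?_ (h1.trans (by gcongr))
  refine Nat.cast_le.2 (Finset.card_le_card fun w' hw' => ?_)
  simp only [Finset.mem_filter, Finset.mem_univ, true_and] at hw' ⊢
  rw [← Finset.sum_filter, Finset.sum_const, nsmul_eq_mul, mul_comm]
  exact mul_le_mul_of_nonneg_left hw' hL

/-- A maximal separated subset is large when balls are small. -/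
lemma exists_separated_subset {β : Type*} [DecidableEq β] (V : Finset β) (R : β → β → Prop)
    [DecidableRel R] (hrefl : ∀ v, R v v) (hsymm : ∀ v w, R v w → R w v) {b : ℝ}
    (hb : ∀ v, ((V.filter (R v)).card : ℝ) ≤ b) :
    ∃ V' ⊆ V, (∀ v ∈ V', ∀ w ∈ V', v ≠ w → ¬ R v w) ∧ (V.card : ℝ) ≤ V'.card * b := by
  classical
  obtain ⟨V', hV', hmax⟩ := Finset.exists_max_image
    (V.powerset.filter fun A => ∀ v ∈ A, ∀ w ∈ A, v ≠ w → ¬ R v w) Finset.card ⟨∅, by simp⟩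
  simp only [Finset.mem_filter, Finset.mem_powerset] at hV' hmax
  refine ⟨V', hV'.1, hV'.2, ?_⟩
  have hcov : V ⊆ V'.biUnion fun v => V.filter (R v) := by
    intro s hs
    rw [Finset.mem_biUnion]
    by_contra hno
    push Not at hno
    have hno' : ∀ v ∈ V', ¬ R v s := fun v hv h =>
      hno v hv (Finset.mem_filter.2 ⟨hs, h⟩)
    have hsV : s ∉ V' := fun h => hno' s h (hrefl s)
    have := hmax (insert s V') ⟨Finset.insert_subset hs hV'.1, ?_⟩
    · rw [Finset.card_insert_of_notMem hsV] at this
      omega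
    · intro v hv w hw hvw
      rw [Finset.mem_insert] at hv hw
      rcases hv with rfl | hv <;> rcases hw with rfl | hw
      · exact absurd rfl hvw
      · exact fun h => hno' w hw (hsymm _ _ h)
      · exact hno' v hv
      · exact hV'.2 v hv w hw hvw
  have h1 : (V.card : ℝ) ≤ ∑ v ∈ V', ((V.filter (R v)).card : ℝ) := by
    exact_mod_cast (Finset.card_le_card hcov).trans Finset.card_biUnion_le
  refine h1.trans ((Finset.sum_le_sum fun v _ => hb v).trans ?_)
  rw [Finset.sum_const, nsmul_eq_mul]

/-- Specification at scale `ε` with gap `m`. -/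
def SpecificationAt [PseudoMetricSpace X] (T : X → X) (ε : ℝ) (m : ℕ) : Prop :=
  ∀ k : ℕ, 2 ≤ k → ∀ x : ℕ → X, ∀ a b : ℕ → ℕ,
    (∀ i < k, a i ≤ b i) →
    (∀ i, i + 1 < k → b i + m ≤ a (i + 1)) →
    ∃ y : X, ∀ i < k, ∀ n ≤ b i - a i,
      dist (T^[a i + n] y) (T^[n] (x i)) < ε

lemma SpecificationAt.exists_glue [PseudoMetricSpace X] {T : X → X} {ε : ℝ} {M : ℕ}
    (h : SpecificationAt T ε M) {m N : ℕ} (hm : 1 ≤ m) (hN : 2 ≤ N) (ω : ℕ → X) :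
    ∃ y, ∀ i < N, ∀ j < m, dist (T^[j + (m + M) * i] y) (T^[j] (ω i)) < ε := by
  obtain ⟨y, hy⟩ := h N hN ω (fun i => (m + M) * i) (fun i => (m + M) * i + (m - 1))
    (fun i _ => Nat.le_add_right _ _) (fun i _ => by rw [mul_add_one]; omega)
  refine ⟨y, fun i hi j hj => ?_⟩
  rw [add_comm j]
  exact hy i hi j (by omega)

lemma abs_sum_glue_sub_le [PseudoMetricSpace X] {T : X → X} {ε : ℝ} {M m N : ℕ} {ω : ℕ → X} {y : X}
    (hy : ∀ i < N, ∀ j < m, dist (T^[j + (m + M) * i] y) (T^[j] (ω i)) < ε) {f : X → ℝ} {C I δ : ℝ}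
    (hC : ∀ x, |f x| ≤ C) (hI : |I| ≤ C) (hosc : ∀ a b, dist a b < ε → |f a - f b| ≤ δ) :
    |∑ j ∈ Finset.range ((m + M) * N), f (T^[j] y) - ((m + M) * N : ℕ) * I| ≤
      |∑ i ∈ Finset.range N, ∑ j ∈ Finset.range m, f (T^[j] (ω i)) - N * (m * I)| +
        N * (m * δ) + N * (M * (2 * C)) := by
  have h1 : ∑ j ∈ Finset.range ((m + M) * N), f (T^[j] y) - ((m + M) * N : ℕ) * I =
      (∑ i ∈ Finset.range N, ∑ j ∈ Finset.range m, f (T^[j] (ω i)) - N * (m * I)) +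
      ∑ i ∈ Finset.range N, ∑ j ∈ Finset.range m,
        (f (T^[j + (m + M) * i] y) - f (T^[j] (ω i))) +
      ∑ i ∈ Finset.range N, ∑ j ∈ Finset.range M, (f (T^[m + j + (m + M) * i] y) - I) := by
    rw [sum_range_mul_eq (fun j => f (T^[j] y))]
    simp only [Finset.sum_range_add, Finset.sum_add_distrib, Finset.sum_sub_distrib,
      Finset.sum_const, Finset.card_range, nsmul_eq_mul]
    push_cast
    ring
  rw [h1]
  refine (abs_add_le _ _).trans (add_le_add ((abs_add_le _ _).trans (add_le_add le_rfl ?_)) ?_)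
  · refine (Finset.abs_sum_le_sum_abs _ _).trans ?_
    rw [← nsmul_eq_mul, ← Finset.card_range N, ← Finset.sum_const, Finset.card_range]
    refine Finset.sum_le_sum fun i hi => (Finset.abs_sum_le_sum_abs _ _).trans ?_
    refine (Finset.sum_le_card_nsmul _ _ δ fun j hj =>
      hosc _ _ (hy i (Finset.mem_range.1 hi) j (Finset.mem_range.1 hj))).trans_eq ?_
    rw [Finset.card_range, nsmul_eq_mul]
  · refine (Finset.abs_sum_le_sum_abs _ _).trans ?_
    rw [← nsmul_eq_mul, ← Finset.card_range N, ← Finset.sum_const, Finset.card_range]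
    refine Finset.sum_le_sum fun i hi => (Finset.abs_sum_le_sum_abs _ _).trans ?_
    refine (Finset.sum_le_card_nsmul _ _ (2 * C) fun j hj => (abs_sub _ _).trans ?_).trans_eq ?_
    · linarith [hC (T^[m + j + (m + M) * i] y)]
    · rw [Finset.card_range, nsmul_eq_mul]

lemma integral_sum_iterate [MeasurableSpace X] {T : X → X} {μ : Measure X}
    (hμ : MeasurePreserving T μ μ) {f : X → ℝ} (hf : Measurable f) (hfi : Integrable f μ) (m : ℕ) :
    Integrable (fun x => ∑ j ∈ Finset.range m, f (T^[j] x)) μ ∧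
      ∫ x, ∑ j ∈ Finset.range m, f (T^[j] x) ∂μ = m * ∫ x, f x ∂μ := by
  have h1 : ∀ j, Integrable (fun x => f (T^[j] x)) μ := fun j =>
    (hμ.iterate j).integrable_comp_of_integrable hfi
  refine ⟨integrable_finsetSum _ fun j _ => h1 j, ?_⟩
  rw [integral_finsetSum _ fun j _ => h1 j]
  have h2 : ∀ j, ∫ x, f (T^[j] x) ∂μ = ∫ x, f x ∂μ := fun j => by
    conv_rhs => rw [← (hμ.iterate j).map_eq, integral_map (hμ.iterate j).measurable.aemeasurable
      hf.aestronglyMeasurable]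
  simp [h2]

lemma integral_neg_log_word [MeasurableSpace X] {μ : Measure X}
    [IsProbabilityMeasure μ] {α : Type*} [Fintype α] [MeasurableSpace α]
    [MeasurableSingletonClass α] {W : X → α} (hW : Measurable W) :
    Integrable (fun x => -Real.log (μ.real (W ⁻¹' {W x}))) μ ∧
    ∫ x, -Real.log (μ.real (W ⁻¹' {W x})) ∂μ = ∑ w, Real.negMulLog (μ.real (W ⁻¹' {w})) := by
  have : IsProbabilityMeasure (μ.map W) := Measure.isProbabilityMeasure_map hW.aemeasurable
  have hi : Integrable (fun w => -Real.log (μ.real (W ⁻¹' {w}))) (μ.map W) := Integrable.of_finite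
  refine ⟨hi.comp_measurable hW, ?_⟩
  rw [← integral_map (f := fun w => -Real.log (μ.real (W ⁻¹' {w}))) hW.aemeasurable
    (measurable_of_finite _).aestronglyMeasurable, integral_fintype hi]
  refine Finset.sum_congr rfl fun w _ => ?_
  rw [map_measureReal_apply hW (measurableSet_singleton w), Real.negMulLog, smul_eq_mul]
  ring

lemma exists_uniform_modulus [MetricSpace X] [CompactSpace X] (F : Finset C(X, ℝ)) {δ : ℝ}
    (hδ : 0 < δ) : ∃ ε > 0, ∀ f ∈ F, ∀ a b, dist a b < ε → |f a - f b| ≤ δ := by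
  classical
  induction F using Finset.induction_on with
  | empty => exact ⟨1, one_pos, by simp⟩
  | insert g F _ ih =>
    obtain ⟨ε₁, hε₁, h₁⟩ := ih
    obtain ⟨ε₂, hε₂, h₂⟩ := Metric.uniformContinuous_iff.1
      (CompactSpace.uniformContinuous_of_continuous g.continuous) δ hδ
    refine ⟨min ε₁ ε₂, lt_min hε₁ hε₂, fun f hf a b hab => ?_⟩
    rcases Finset.mem_insert.1 hf with rfl | hf
    · exact (h₂ (hab.trans_le (min_le_right _ _))).le
    · exact h₁ f hf a b (hab.trans_le (min_le_left _ _))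

/-- The set of positions at which the itineraries of two tuples differ is not much larger than
the set of positions where one of them leaves a set of separation. -/
lemma exists_separated_position [MetricSpace X] {T : X → X} {K : ℕ} {P : X → Fin K} {U : Set X}
    {ε : ℝ} (hU : ∀ x ∈ U, ∀ y ∈ U, dist x y < ε → P x = P y) {N m : ℕ} {r : ℝ} {ω ω' : ℕ → X}
    (hω : ∑ i ∈ Finset.range N, ∑ j ∈ Finset.range m, Uᶜ.indicator (1 : X → ℝ) (T^[j] (ω i)) ≤ r)
    (hω' : ∑ i ∈ Finset.range N, ∑ j ∈ Finset.range m,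
      Uᶜ.indicator (1 : X → ℝ) (T^[j] (ω' i)) ≤ r)
    (hd : 2 * r < hammingDist (fun q : Fin N × Fin m => P (T^[q.2] (ω q.1)))
      (fun q : Fin N × Fin m => P (T^[q.2] (ω' q.1)))) :
    ∃ i < N, ∃ j < m, ε ≤ dist (T^[j] (ω i)) (T^[j] (ω' i)) := by
  classical
  by_contra hno
  push Not at hno
  have hcard : ∀ ω : ℕ → X, ∑ i ∈ Finset.range N, ∑ j ∈ Finset.range m,
      Uᶜ.indicator (1 : X → ℝ) (T^[j] (ω i)) =
      ∑ q : Fin N × Fin m, Uᶜ.indicator (1 : X → ℝ) (T^[q.2] (ω q.1)) := by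
    intro ω
    rw [Fintype.sum_prod_type, Finset.sum_range]
    simp only [Finset.sum_range]
  rw [hcard] at hω hω'
  have h1 : (hammingDist (fun q : Fin N × Fin m => P (T^[q.2] (ω q.1)))
      (fun q : Fin N × Fin m => P (T^[q.2] (ω' q.1))) : ℝ) ≤
      ∑ q : Fin N × Fin m, (Uᶜ.indicator (1 : X → ℝ) (T^[q.2] (ω q.1)) +
        Uᶜ.indicator (1 : X → ℝ) (T^[q.2] (ω' q.1))) := by
    rw [hammingDist, Finset.card_filter, Nat.cast_sum]
    refine Finset.sum_le_sum fun q _ => ?_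
    have hn : ∀ x, 0 ≤ Uᶜ.indicator (1 : X → ℝ) x := fun x =>
      indicator_nonneg (fun _ _ => zero_le_one) x
    split_ifs with h
    · by_cases hx : T^[q.2] (ω q.1) ∈ U
      · by_cases hx' : T^[q.2] (ω' q.1) ∈ U
        · exact absurd (hU _ hx _ hx' (hno _ q.1.2 _ q.2.2)) h
        · rw [indicator_of_mem (show _ ∈ Uᶜ from hx')]
          simpa using hn _
      · rw [indicator_of_mem (show _ ∈ Uᶜ from hx)]
        simpa using hn _
    · simpa using add_nonneg (hn _) (hn _)
  rw [Finset.sum_add_distrib] at h1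
  linarith

/-- Under specification, an invariant measure of entropy larger than `h` is approximated by
large separated families of orbit segments, at a scale depending only on `h`. -/
theorem exists_separated_family [MetricSpace X] [CompactSpace X] [MeasurableSpace X]
    [BorelSpace X] {T : X → X} (hspec : SpecificationProperty T) {μ : Measure X}
    [IsProbabilityMeasure μ] (hμ : MeasurePreserving T μ μ) {K : ℕ} {P : X → Fin K}
    (hP : Measurable P) {h h' : ℝ} (hlt : h < h')
    (hent : ∀ᶠ m : ℕ in atTop,
      m * h' ≤ ∑ w : Fin m → Fin K, Real.negMulLog (μ.real (word T P m ⁻¹' {w}))) :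
    ∃ ε > 0, ∀ (F : Finset C(X, ℝ)) (δ : ℝ), 0 < δ → ∀ n₀ : ℕ, ∃ n ≥ n₀, ∃ E : Finset X,
      (∀ x ∈ E, ∀ y ∈ E, x ≠ y → ∃ j < n, ε ≤ dist (T^[j] x) (T^[j] y)) ∧
      Real.exp (n * h) ≤ E.card ∧
      ∀ x ∈ E, ∀ f ∈ F, |∑ j ∈ Finset.range n, f (T^[j] x) - n * ∫ y, f y ∂μ| ≤ n * δ := by
  classical
  set η := h' - h with hη
  have hη0 : 0 < η := by linarith
  obtain ⟨L, hL0, hL⟩ : ∃ L : ℝ, 0 ≤ L ∧ K * Real.exp (-L) ≤ η / 8 := by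
    have h1 : Tendsto (fun L : ℝ => (K : ℝ) * Real.exp (-L)) atTop (𝓝 (K * 0)) :=
      (Real.tendsto_exp_neg_atTop_nhds_zero).const_mul _
    rw [mul_zero] at h1
    obtain ⟨L, hL1, hL2⟩ := ((eventually_ge_atTop (0 : ℝ)).and
      (h1.eventually_lt_const (show 0 < η / 8 by positivity))).exists
    exact ⟨L, hL1, hL2.le⟩
  set κ := η / (16 * (L + 1)) with hκ
  have hκ0 : 0 < κ := by positivity
  have hLκ : L * (2 * κ) ≤ η / 8 := by
    have : κ * (16 * (L + 1)) = η := by rw [hκ]; field_simp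
    nlinarith
  obtain ⟨U, hUm, hUμ, ε₀, hε₀, hU⟩ := exists_uniform_separation μ hP (half_pos hκ0)
  refine ⟨ε₀ / 2, half_pos hε₀, fun F δ hδ n₀ => ?_⟩
  obtain ⟨ε₁, hε₁, hosc⟩ := exists_uniform_modulus F (show 0 < δ / 4 by positivity)
  set ε := min ε₁ (ε₀ / 4) with hε
  have hε0 : 0 < ε := lt_min hε₁ (by positivity)
  obtain ⟨M, -, hM⟩ := hspec ε hε0
  have hM : SpecificationAt T ε M := hM
  have hTm : Measurable T := hμ.measurable
  -- choice of the length of the blocks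
  have hlin : ∀ {a b : ℝ}, 0 < b → ∀ᶠ m : ℕ in atTop, a ≤ m * b := fun {a b} hb =>
    (tendsto_natCast_atTop_atTop.atTop_mul_const hb).eventually_ge_atTop a
  obtain ⟨m, hm1, hmF, hmh, hmH⟩ := ((eventually_ge_atTop 1).and
    (((Finset.eventually_all F).2 fun f _ =>
      hlin (a := M * (2 * ‖f‖)) (show 0 < δ / 4 by positivity)).and
    ((hlin (a := M * h) (show 0 < η / 4 by positivity)).and hent))).exists
  have hm0 : (0 : ℝ) < m := by exact_mod_cast hm1
  have hWm := measurable_word hTm hP m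
  set H := ∑ w : Fin m → Fin K, Real.negMulLog (μ.real (word T P m ⁻¹' {w})) with hH
  have hfm : ∀ f : X → ℝ, Measurable f → Measurable fun x => ∑ j ∈ Finset.range m, f (T^[j] x) :=
    fun f hf => Finset.measurable_sum _ fun j _ => hf.comp (hTm.iterate j)
  have hfi : ∀ f : C(X, ℝ), Integrable f μ := fun f =>
    Integrable.of_bound f.continuous.measurable.aestronglyMeasurable ‖f‖
      (ae_of_all _ fun x => f.norm_coe_le_norm x)
  have hum : Measurable (Uᶜ.indicator (1 : X → ℝ)) := measurable_one.indicator hUm.compl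
  have hui : Integrable (Uᶜ.indicator (1 : X → ℝ)) μ := (integrable_const 1).indicator hUm.compl
  let G : F ⊕ Bool → X → ℝ := Sum.elim (fun f x => ∑ j ∈ Finset.range m, f.1 (T^[j] x))
    (fun b => if b then fun x => -Real.log (μ.real (word T P m ⁻¹' {word T P m x}))
      else fun x => ∑ j ∈ Finset.range m, Uᶜ.indicator (1 : X → ℝ) (T^[j] x))
  let τ : F ⊕ Bool → ℝ := Sum.elim (fun _ => m * (δ / 4))
    (fun b => if b then m * (η / 4) else m * (κ / 2))
  have hlln := eventually_half_le_infinitePi μ G (by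
    rintro (f | b)
    · exact hfm _ f.1.continuous.measurable
    · cases b
      · exact hfm _ hum
      · exact (measurable_of_finite fun w => -Real.log (μ.real (word T P m ⁻¹' {w}))).comp hWm)
    (by
    rintro (f | b)
    · exact (integral_sum_iterate hμ f.1.continuous.measurable (hfi f.1) m).1
    · cases b
      · exact (integral_sum_iterate hμ hum hui m).1
      · exact (integral_neg_log_word hWm).1) τ (by
    rintro (f | b)
    · simp only [τ, Sum.elim_inl]; positivity
    · cases b <;> simp [τ] <;> positivity)
  obtain ⟨N, hN, hN2, hNn, hNη⟩ := (hlln.and ((eventually_ge_atTop 2).and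
    ((eventually_ge_atTop n₀).and
      (hlin (a := 1) (show 0 < m * (η / 4) by positivity))))).exists
  set S : Set (ℕ → X) :=
    {ω | ∀ l, |∑ i ∈ Finset.range N, G l (ω i) - N * ∫ x, G l x ∂μ| ≤ N * τ l} with hS
  have hSf : ∀ ω ∈ S, ∀ f ∈ F, |∑ i ∈ Finset.range N, ∑ j ∈ Finset.range m, f (T^[j] (ω i)) -
      N * (m * ∫ x, f x ∂μ)| ≤ N * (m * (δ / 4)) := by
    intro ω hω f hf
    have h1 := hω (Sum.inl ⟨f, hf⟩)
    simp only [G, τ, Sum.elim_inl] at h1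
    rwa [(integral_sum_iterate hμ f.continuous.measurable (hfi f) m).2] at h1
  have hSH : ∀ ω ∈ S, N * (H - m * (η / 4)) ≤
      ∑ i ∈ Finset.range N, -Real.log (μ.real (word T P m ⁻¹' {word T P m (ω i)})) := by
    intro ω hω
    have h1 := hω (Sum.inr true)
    simp only [G, τ, Sum.elim_inr, if_true] at h1
    rw [(integral_neg_log_word hWm).2] at h1
    linarith [(abs_le.1 h1).1]
  have hSU : ∀ ω ∈ S, ∑ i ∈ Finset.range N, ∑ j ∈ Finset.range m,
      Uᶜ.indicator (1 : X → ℝ) (T^[j] (ω i)) ≤ N * (m * κ) := by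
    intro ω hω
    have h1 := hω (Sum.inr false)
    simp only [G, τ, Sum.elim_inr, if_false, Bool.false_eq_true] at h1
    rw [(integral_sum_iterate hμ hum hui m).2, integral_indicator_one hUm.compl] at h1
    have h2 : (N : ℝ) * (m * μ.real Uᶜ) ≤ N * (m * (κ / 2)) := by gcongr
    linarith [(abs_le.1 h1).2]
  let code : (ℕ → X) → (Fin N × Fin m → Fin K) := fun ω q => P (T^[q.2] (ω q.1))
  let V : Finset (Fin N × Fin m → Fin K) := Finset.univ.filter fun v => ∃ ω ∈ S, code ω = v
  have hV := half_exp_le_card_image μ hWm code (N := N) (fun ω ω' hc i hi => by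
    funext j
    exact congrFun hc (⟨i, hi⟩, j)) hN hSH V (fun ω hω => by simp [V]; exact ⟨ω, hω, rfl⟩)
    (fun v hv => by simpa [V] using hv)
  obtain ⟨V', hV'V, hV'sep, hV'card⟩ := exists_separated_subset V
    (fun v w => (hammingDist v w : ℝ) ≤ 2 * (N * (m * κ)))
    (fun v => by simp only [hammingDist_self, Nat.cast_zero]; positivity)
    (fun v w h => by rwa [hammingDist_comm]) (fun v => le_trans (Nat.cast_le.2
      (Finset.card_le_card (Finset.filter_subset_filter _ (Finset.subset_univ V))))
      (card_hammingDist_le v L _ hL0))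
  have h1 : ∀ v : Fin N × Fin m → Fin K, ∃ ω y, v ∈ V' → ω ∈ S ∧ code ω = v ∧
      ∀ i < N, ∀ j < m, dist (T^[j + (m + M) * i] y) (T^[j] (ω i)) < ε := by
    intro v
    by_cases hv : v ∈ V'
    · have := hV'V hv
      simp only [V, Finset.mem_filter, Finset.mem_univ, true_and] at this
      obtain ⟨ω, hω, hc⟩ := this
      obtain ⟨y, hy⟩ := hM.exists_glue hm1 hN2 ω
      exact ⟨ω, y, fun _ => ⟨hω, hc, hy⟩⟩
    · obtain ⟨x⟩ : Nonempty X := nonempty_of_isProbabilityMeasure μ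
      exact ⟨fun _ => x, x, fun h => absurd h hv⟩
  choose ω y hωy using h1
  have hsep : ∀ v ∈ V', ∀ w ∈ V', v ≠ w →
      ∃ j < (m + M) * N, ε₀ / 2 ≤ dist (T^[j] (y v)) (T^[j] (y w)) := by
    intro v hv w hw hvw
    obtain ⟨hv1, hv2, hv3⟩ := hωy v hv
    obtain ⟨hw1, hw2, hw3⟩ := hωy w hw
    have h2 := hV'sep v hv w hw hvw
    rw [not_le, ← hv2, ← hw2] at h2
    obtain ⟨i, hi, j, hj, hd⟩ := exists_separated_position hU (hSU _ hv1) (hSU _ hw1) h2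
    refine ⟨j + (m + M) * i, ?_, ?_⟩
    · calc j + (m + M) * i < (m + M) * (i + 1) := by rw [mul_add_one]; omega
        _ ≤ (m + M) * N := Nat.mul_le_mul_left _ hi
    · have h3 := hv3 i hi j hj
      have h4 := hw3 i hi j hj
      have h5 : ε ≤ ε₀ / 4 := min_le_right _ _
      have h6 := dist_triangle4 (T^[j] (ω v i)) (T^[j + (m + M) * i] (y v))
        (T^[j + (m + M) * i] (y w)) (T^[j] (ω w i))
      rw [dist_comm (T^[j] (ω v i)) (T^[j + (m + M) * i] (y v))] at h6
      linarith
  have hinj : Set.InjOn y V' := by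
    intro v hv w hw hyy
    by_contra hvw
    obtain ⟨j, -, hj⟩ := hsep v hv w hw hvw
    rw [hyy, dist_self] at hj
    linarith
  refine ⟨(m + M) * N, ?_, V'.image y, ?_, ?_, ?_⟩
  · exact hNn.trans (Nat.le_mul_of_pos_left N (by omega))
  · intro a ha b hb hab
    obtain ⟨v, hv, rfl⟩ := Finset.mem_image.1 ha
    obtain ⟨w, hw, rfl⟩ := Finset.mem_image.1 hb
    exact hsep v hv w hw fun h => hab (by rw [h])
  · rw [Finset.card_image_of_injOn hinj]
    have hb : Real.exp (L * (2 * (N * (m * κ))) +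
        Fintype.card (Fin K) * Real.exp (-L) * Fintype.card (Fin N × Fin m)) ≤
        Real.exp (N * (m * (η / 4))) := by
      rw [Real.exp_le_exp, Fintype.card_prod, Fintype.card_fin, Fintype.card_fin, Fintype.card_fin]
      push_cast
      have h2 : (N : ℝ) * m * (L * (2 * κ)) ≤ N * m * (η / 8) := by gcongr
      have h3 : (N : ℝ) * m * (K * Real.exp (-L)) ≤ N * m * (η / 8) := by gcongr
      linarith
    have h2 : Real.exp (N * (H - m * (η / 4))) / 2 ≤ V'.card * Real.exp (N * (m * (η / 4))) :=
      hV.trans (hV'card.trans (by gcongr))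
    have h3 : Real.exp (-1) ≤ 1 / 2 := by
      rw [Real.exp_neg, one_div]
      exact inv_anti₀ two_pos (by linarith [Real.add_one_le_exp (1 : ℝ)])
    have h4 : Real.exp (N * (H - m * (η / 4)) - N * (m * (η / 4)) - 1) ≤ V'.card := by
      rw [sub_eq_add_neg _ (1 : ℝ), Real.exp_add, Real.exp_sub, div_mul_eq_mul_div,
        div_le_iff₀ (Real.exp_pos _)]
      refine le_trans ?_ h2
      rw [div_eq_mul_one_div]
      exact mul_le_mul_of_nonneg_left (h3.trans_eq (one_div 2)) (Real.exp_pos _).le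
    refine le_trans (Real.exp_le_exp.2 ?_) h4
    push_cast
    have h5 : (N : ℝ) * (m * h') ≤ N * H := by gcongr
    have h6 : (N : ℝ) * (M * h) ≤ N * (m * (η / 4)) := by gcongr
    have h7 : h' = h + η := by rw [hη]; ring
    rw [h7] at h5
    linarith
  · intro x hx f hf
    obtain ⟨v, hv, rfl⟩ := Finset.mem_image.1 hx
    obtain ⟨hv1, hv2, hv3⟩ := hωy v hv
    have hI : |∫ x, f x ∂μ| ≤ ‖f‖ := by
      have := norm_integral_le_of_norm_le_const (μ := μ) (ae_of_all _ fun x => f.norm_coe_le_norm x)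
      simpa using this
    refine (abs_sum_glue_sub_le hv3 (f := f) (C := ‖f‖) (fun x => f.norm_coe_le_norm x) hI
      (fun a b hab => hosc f hf a b (hab.trans_le (min_le_left _ _)))).trans ?_
    have h2 := hSf _ hv1 f hf
    have h3 : (N : ℝ) * (M * (2 * ‖f‖)) ≤ N * (m * (δ / 4)) := 
      mul_le_mul_of_nonneg_left (hmF f hf) (Nat.cast_nonneg N)
    have h4 : (0 : ℝ) ≤ N * (m * (δ / 4)) := by positivity
    have h5 : (0 : ℝ) ≤ M * N * δ := by positivity
    push_cast
    linarith

lemma exists_slow_reparametrization (w : ℕ → ℕ) :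
    ∃ κ : ℕ → ℕ, Monotone κ ∧ Tendsto κ atTop atTop ∧ ∀ᶠ i in atTop, w (κ i) ^ 2 ≤ i := by
  refine ⟨fun i => Nat.findGreatest (fun k => w k ^ 2 ≤ i) i, fun i j hij =>
    Nat.findGreatest_mono (fun k hk => le_trans hk hij) hij, ?_, ?_⟩
  · refine tendsto_atTop.2 fun k => ?_
    filter_upwards [eventually_ge_atTop k, eventually_ge_atTop (w k ^ 2)] with i h1 h2
    exact Nat.le_findGreatest h1 h2
  · filter_upwards [eventually_ge_atTop (w 0 ^ 2)] with i hi
    exact Nat.findGreatest_spec (P := fun k => w k ^ 2 ≤ i) (Nat.zero_le i) hi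

lemma exists_sum_range_le_lt {w : ℕ → ℕ} (hw : ∀ i, 0 < w i) (n : ℕ) :
    ∃ i, ∑ j ∈ Finset.range i, w j ≤ n ∧ n < ∑ j ∈ Finset.range (i + 1), w j := by
  induction n with
  | zero => exact ⟨0, by simp, by simpa using hw 0⟩
  | succ n ih =>
    obtain ⟨i, h1, h2⟩ := ih
    by_cases h : n + 1 < ∑ j ∈ Finset.range (i + 1), w j
    · exact ⟨i, by omega, h⟩
    · refine ⟨i + 1, by omega, ?_⟩
      rw [Finset.sum_range_succ _ (i + 1)]
      have := hw (i + 1)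
      omega

lemma le_sum_range {w : ℕ → ℕ} (hw : ∀ i, 0 < w i) (n : ℕ) : n ≤ ∑ j ∈ Finset.range n, w j := by
  simpa using Finset.card_nsmul_le_sum (Finset.range n) w 1 fun i _ => hw i

lemma tendsto_sum_range {w : ℕ → ℕ} (hw : ∀ i, 0 < w i) :
    Tendsto (fun n => ∑ j ∈ Finset.range n, (w j : ℝ)) atTop atTop := by
  refine tendsto_atTop_mono (fun n => ?_) tendsto_natCast_atTop_atTop
  exact_mod_cast le_sum_range hw n

/-- Cesàro averages along consecutive blocks of negligible lengths. -/
lemma tendsto_average_of_blocks {w : ℕ → ℕ} (hw : ∀ i, 0 < w i)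
    (hwo : (fun i => (w i : ℝ)) =o[atTop] fun i => ∑ j ∈ Finset.range i, (w j : ℝ))
    {u : ℕ → ℝ} {C : ℝ} (hu : ∀ n, |u n| ≤ C)
    (hub : (fun i => ∑ j ∈ Finset.range (w i), u (∑ j ∈ Finset.range i, w j + j)) =o[atTop]
      fun i => (w i : ℝ)) :
    Tendsto (fun n : ℕ => (∑ j ∈ Finset.range n, u j) / n) atTop (𝓝 0) := by
  have hC : 0 ≤ C := (abs_nonneg _).trans (hu 0)
  have hsum : ∀ i, ∑ l ∈ Finset.range i, ∑ j ∈ Finset.range (w l),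
      u (∑ j ∈ Finset.range l, w j + j) =
      ∑ j ∈ Finset.range (∑ j ∈ Finset.range i, w j), u j := by
    intro i
    induction i with
    | zero => simp
    | succ i ih => rw [Finset.sum_range_succ, ih, Finset.sum_range_succ w, Finset.sum_range_add]
  have h1 := hub.sum_range (fun i => Nat.cast_nonneg (w i)) (tendsto_sum_range hw)
  simp only [hsum] at h1
  rw [Metric.tendsto_atTop]
  intro c hc
  have h2 := (h1.bound (show 0 < c / 4 by positivity)).and
    (hwo.bound (show 0 < c / (4 * (C + 1)) by positivity))
  obtain ⟨i₀, hi₀⟩ := eventually_atTop.1 h2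
  refine ⟨∑ j ∈ Finset.range (i₀ + 1), w j, fun n hn => ?_⟩
  obtain ⟨i, hi1, hi2⟩ := exists_sum_range_le_lt hw n
  have hii : i₀ ≤ i := by
    by_contra h
    have : ∑ j ∈ Finset.range (i + 1), w j ≤ ∑ j ∈ Finset.range (i₀ + 1), w j :=
      Finset.sum_le_sum_of_subset (Finset.range_mono (by omega))
    omega
  obtain ⟨h3, h4⟩ := hi₀ i hii
  obtain ⟨r, rfl⟩ := Nat.exists_eq_add_of_le hi1
  have hn0 : 0 < ∑ j ∈ Finset.range i, w j + r := lt_of_lt_of_le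
    ((Nat.succ_pos i₀).trans_le (le_sum_range hw _)) hn
  rw [Finset.sum_range_succ] at hi2
  have hr : r ≤ w i := by omega
  set t := ∑ j ∈ Finset.range i, w j with ht
  have htc : ∑ j ∈ Finset.range i, (w j : ℝ) = t := by rw [ht]; push_cast; rfl
  rw [htc] at h3 h4
  simp only [Real.norm_eq_abs, Nat.abs_cast] at h3 h4
  rw [Real.dist_eq, sub_zero, abs_div, Nat.abs_cast, div_lt_iff₀ (by exact_mod_cast hn0),
    Finset.sum_range_add]
  have h5 : |∑ j ∈ Finset.range r, u (t + j)| ≤ w i * C := by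
    refine (Finset.abs_sum_le_sum_abs _ _).trans
      ((Finset.sum_le_card_nsmul _ _ C fun j _ => hu _).trans ?_)
    rw [Finset.card_range, nsmul_eq_mul]
    gcongr
  have h6 : (w i : ℝ) * C ≤ c / 4 * t := by
    calc (w i : ℝ) * C ≤ c / (4 * (C + 1)) * t * (C + 1) := by gcongr; linarith
      _ = c / 4 * t := by field_simp
  have h7 : (t : ℝ) ≤ (t + r : ℕ) := by push_cast; linarith [Nat.cast_nonneg (α := ℝ) r]
  have h8 : (0 : ℝ) < (t + r : ℕ) := by exact_mod_cast hn0
  calc _ ≤ _ := abs_add_le _ _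
    _ ≤ c / 4 * t + c / 4 * t := add_le_add h3 (h5.trans h6)
    _ ≤ c / 4 * (t + r : ℕ) + c / 4 * (t + r : ℕ) := by gcongr
    _ < c * (t + r : ℕ) := by nlinarith

/-- A finite sequence of orbit segments is shadowed with precision improving along the sequence. -/
lemma exists_shadow_finite [PseudoMetricSpace X] {T : X → X} {r : ℕ → ℝ} (hr : Antitone r)
    {M L : ℕ → ℕ} (hL : ∀ k, 0 < L k) (hM : ∀ k, SpecificationAt T (r k - r (k + 1)) (M k))
    {κ : ℕ → ℕ} (hκ : Monotone κ) (e : ℕ → X) (j : ℕ) :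
    ∃ z, ∀ i < j, ∀ n < L (κ i),
      dist (T^[∑ l ∈ Finset.range i, (M (κ l) + L (κ l)) + (M (κ i) + n)] z) (T^[n] (e i)) ≤
        r (κ i) - r (κ (j - 1) + 1) := by
  set t : ℕ → ℕ := fun i => ∑ l ∈ Finset.range i, (M (κ l) + L (κ l)) with ht
  have hts : ∀ i, t (i + 1) = t i + (M (κ i) + L (κ i)) := fun i => Finset.sum_range_succ _ _
  have htm : Monotone t := monotone_nat_of_le_succ fun i => by rw [hts]; omega
  induction j using Nat.strong_induction_on with
  | _ j ih =>
    rcases Nat.eq_zero_or_pos j with rfl | hj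
    · exact ⟨e 0, by simp⟩
    classical
    have hex : ∃ c, κ c = κ (j - 1) := ⟨_, rfl⟩
    obtain ⟨c, hcκ, hcmin⟩ : ∃ c, κ c = κ (j - 1) ∧ ∀ i < c, κ i ≠ κ (j - 1) :=
      ⟨Nat.find hex, Nat.find_spec hex, fun i hi => Nat.find_min hex hi⟩
    set k := κ (j - 1) with hk
    have hcj : c < j := by
      by_contra h
      exact hcmin (j - 1) (by omega) rfl
    have hkc : ∀ i, c ≤ i → i < j → κ i = k := fun i h1 h2 =>
      le_antisymm (hκ (by omega)) (hcκ ▸ hκ h1)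
    obtain ⟨z, hz⟩ := ih c hcj
    obtain ⟨y, hy⟩ := hM k (j - c + 1) (by omega)
      (fun p => Nat.casesOn p z fun q => e (c + q))
      (fun p => Nat.casesOn p 0 fun q => t (c + q) + M k)
      (fun p => Nat.casesOn p (t c - 1) fun q => t (c + q + 1) - 1)
      (by
        rintro (_ | q) hq
        · exact Nat.zero_le _
        · have := hL k
          simp only [hts, hkc (c + q) (by omega) (by omega)]
          omega)
      (by
        rintro (_ | q) hq
        · change t c - 1 + M k ≤ t (c + 0) + M k
          rw [add_zero]
          omega
        · change t (c + q + 1) - 1 + M k ≤ t (c + (q + 1)) + M k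
          rw [← add_assoc]
          omega)
    refine ⟨y, fun i hi n hn => ?_⟩
    rcases lt_or_ge i c with hic | hic
    · have h1 : dist (T^[t i + (M (κ i) + n)] z) (T^[n] (e i)) ≤
        r (κ i) - r (κ (c - 1) + 1) := hz i hic n hn
      have h2 : t i + (M (κ i) + n) ≤ t c - 1 := by
        have := htm (show i + 1 ≤ c from hic)
        rw [hts] at this
        omega
      have h3 : dist (T^[0 + (t i + (M (κ i) + n))] y) (T^[t i + (M (κ i) + n)] z) <
        r k - r (k + 1) := hy 0 (by omega) (t i + (M (κ i) + n)) h2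
      rw [zero_add] at h3
      have h4 : r k ≤ r (κ (c - 1) + 1) := by
        refine hr (lt_of_le_of_ne ?_ (hcmin (c - 1) (by omega)))
        exact hκ (by omega)
      refine (dist_triangle _ _ _).trans ((add_le_add h3.le h1).trans ?_)
      linarith
    · obtain ⟨q, rfl⟩ := Nat.exists_eq_add_of_le hic
      have h1 := hkc _ hic hi
      rw [h1] at hn ⊢
      have h3 : dist (T^[t (c + q) + M k + n] y) (T^[n] (e (c + q))) < r k - r (k + 1) :=
        hy (q + 1) (by omega) n (by
          change n ≤ t (c + q + 1) - 1 - (t (c + q) + M k)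
          rw [hts, h1]
          omega)
      rw [add_assoc] at h3
      exact h3.le

/-- Any sequence of orbit segments is shadowed with precision improving along the sequence. -/
lemma exists_shadow [PseudoMetricSpace X] [CompactSpace X] {T : X → X} (hT : Continuous T)
    {r : ℕ → ℝ} (hr : Antitone r) (hr0 : ∀ k, 0 ≤ r k)
    {M L : ℕ → ℕ} (hL : ∀ k, 0 < L k) (hM : ∀ k, SpecificationAt T (r k - r (k + 1)) (M k))
    {κ : ℕ → ℕ} (hκ : Monotone κ) (e : ℕ → X) :
    ∃ z, ∀ i, ∀ n < L (κ i),
      dist (T^[∑ l ∈ Finset.range i, (M (κ l) + L (κ l)) + (M (κ i) + n)] z) (T^[n] (e i)) ≤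
        r (κ i) := by
  choose z hz using exists_shadow_finite hr hL hM hκ e
  obtain ⟨a, φ, hφ, ha⟩ := CompactSpace.tendsto_subseq z
  refine ⟨a, fun i n hn => ?_⟩
  refine le_of_tendsto ((((hT.iterate _).tendsto a).comp ha).dist tendsto_const_nhds) ?_
  filter_upwards [eventually_gt_atTop i] with j hj
  exact (hz (φ j) i (hj.trans_le (hφ.id_le j)) n hn).trans (by linarith [hr0 (κ (φ j - 1) + 1)])

lemma isGeneric_of_dense [TopologicalSpace X] [CompactSpace X] [MeasurableSpace X]
    [OpensMeasurableSpace X] {T : X → X}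
    {μ : Measure X} [IsProbabilityMeasure μ] {g : ℕ → C(X, ℝ)} (hg : DenseRange g) {x : X}
    (h : ∀ l, Tendsto (fun n : ℕ => (∑ j ∈ Finset.range n, (g l (T^[j] x) - ∫ y, g l y ∂μ)) / n)
      atTop (𝓝 0)) : IsGeneric T μ x := by
  intro f
  have hfi : ∀ f : C(X, ℝ), Integrable f μ := fun f =>
    Integrable.of_bound f.continuous.measurable.aestronglyMeasurable ‖f‖
      (ae_of_all _ fun x => f.norm_coe_le_norm x)
  rw [Metric.tendsto_atTop]
  intro c hc
  obtain ⟨l, hl⟩ := hg.exists_dist_lt f (show 0 < c / 3 by positivity)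
  rw [dist_eq_norm] at hl
  obtain ⟨n₀, hn₀⟩ := Metric.tendsto_atTop.1 (h l) (c / 3) (by positivity)
  refine ⟨max n₀ 1, fun n hn => ?_⟩
  have hn1 : (0 : ℝ) < n := by exact_mod_cast (le_max_right _ _).trans hn
  have h1 := hn₀ n ((le_max_left _ _).trans hn)
  rw [Finset.sum_sub_distrib, Finset.sum_const, Finset.card_range, nsmul_eq_mul, Real.dist_eq,
    sub_zero, sub_div, mul_div_cancel_left₀ _ hn1.ne'] at h1
  have h2 : |∫ y, f y ∂μ - ∫ y, g l y ∂μ| ≤ ‖f - g l‖ := by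
    rw [← integral_sub (hfi f) (hfi _)]
    have := norm_integral_le_of_norm_le_const (μ := μ)
      (ae_of_all _ fun x => (f - g l).norm_coe_le_norm x)
    simpa using this
  have h3 : |(∑ j ∈ Finset.range n, f (T^[j] x)) / n - (∑ j ∈ Finset.range n, g l (T^[j] x)) / n| ≤
      ‖f - g l‖ := by
    rw [← sub_div, ← Finset.sum_sub_distrib, abs_div, Nat.abs_cast, div_le_iff₀ hn1]
    refine (Finset.abs_sum_le_sum_abs _ _).trans ((Finset.sum_le_card_nsmul _ _ ‖f - g l‖
      fun j _ => (f - g l).norm_coe_le_norm (T^[j] x)).trans_eq ?_)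
    rw [Finset.card_range, nsmul_eq_mul, mul_comm]
  rw [Real.dist_eq]
  rw [abs_le] at h2 h3
  rw [abs_lt] at h1 ⊢
  constructor <;> linarith

/-- Mass distribution principle for the image of a product space. -/
lemma one_le_bowenH_of_map [PseudoMetricSpace X] {T : X → X} {Z : Set X} {α : ℕ → Type*}
    [∀ i, Fintype (α i)] [∀ i, Nonempty (α i)] {Φ : (∀ i, α i) → X} (hΦ : ∀ ω, Φ ω ∈ Z)
    {s ε : ℝ} {n₀ : ℕ}
    (h : ∀ n ≥ n₀, ∃ j, (∀ ω ω', (∀ i < n, dist (T^[i] (Φ ω)) (T^[i] (Φ ω')) < 2 * ε) →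
      ∀ i < j, ω i = ω' i) ∧ Real.exp (s * n) ≤ ∏ i ∈ Finset.range j, (Fintype.card (α i) : ℝ)) :
    1 ≤ bowenH T Z s ε n₀ := by
  let _ : ∀ i, MeasurableSpace (α i) := fun _ => ⊤
  let ν := Measure.infinitePi fun i => ProbabilityTheory.uniformOn (univ : Set (α i))
  have : ∀ i, IsProbabilityMeasure (ProbabilityTheory.uniformOn (univ : Set (α i))) := fun i =>
    ProbabilityTheory.isProbabilityMeasure_uniformOn finite_univ univ_nonempty
  refine le_iInf₂ fun C hC => le_iInf₂ fun hn hZ => ?_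
  calc (1 : ℝ≥0∞) = ν univ := measure_univ.symm
    _ ≤ ν (⋃ p ∈ C, Φ ⁻¹' bowenBall T p.1 p.2 ε) := measure_mono fun ω _ => by
        simpa using hZ (hΦ ω)
    _ ≤ ∑' p : C, ν (Φ ⁻¹' bowenBall T (p : X × ℕ).1 (p : X × ℕ).2 ε) :=
        measure_biUnion_le ν hC _
    _ ≤ _ := ENNReal.tsum_le_tsum fun p => ?_
  obtain ⟨⟨x, n⟩, hp⟩ := p
  simp only
  rcases (Φ ⁻¹' bowenBall T x n ε).eq_empty_or_nonempty with he | ⟨ω₀, hω₀⟩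
  · rw [he, measure_empty]
    exact zero_le
  obtain ⟨j, hj1, hj2⟩ := h n (hn _ hp)
  have hsub : Φ ⁻¹' bowenBall T x n ε ⊆ Set.pi (Finset.range j) fun i => {ω₀ i} := by
    intro ω hω i hi
    refine hj1 ω ω₀ (fun l hl => ?_) i (Finset.mem_range.1 hi)
    have h1 := hω l hl
    have h2 := hω₀ l hl
    rw [dist_comm] at h1
    linarith [dist_triangle (T^[l] (Φ ω)) (T^[l] x) (T^[l] (Φ ω₀))]
  refine (measure_mono hsub).trans ?_
  rw [Measure.infinitePi_pi _ fun i _ => measurableSet_singleton _]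
  simp only [ProbabilityTheory.uniformOn_univ, Measure.count_singleton]
  have h3 : ∀ i, (1 : ℝ≥0∞) / Fintype.card (α i) =
      ENNReal.ofReal ((Fintype.card (α i) : ℝ)⁻¹) := fun i => by
    rw [ENNReal.ofReal_inv_of_pos (by exact_mod_cast Fintype.card_pos), ENNReal.ofReal_natCast,
      one_div]
  simp only [h3]
  rw [← ENNReal.ofReal_prod_of_nonneg fun i _ => by positivity]
  refine ENNReal.ofReal_le_ofReal ?_
  rw [Finset.prod_inv_distrib, neg_mul, Real.exp_neg]
  exact inv_anti₀ (Real.exp_pos _) hj2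

lemma exists_one_le_bowenH [MetricSpace X] [CompactSpace X] [MeasurableSpace X]
    [BorelSpace X] {T : X → X} (hT : Continuous T) (hspec : SpecificationProperty T)
    {μ : Measure X} [IsProbabilityMeasure μ] {h ε : ℝ} (hε : 0 < ε)
    (hE : ∀ (F : Finset C(X, ℝ)) (δ : ℝ), 0 < δ → ∀ n₀ : ℕ, ∃ n ≥ n₀, ∃ E : Finset X,
      (∀ x ∈ E, ∀ y ∈ E, x ≠ y → ∃ j < n, ε ≤ dist (T^[j] x) (T^[j] y)) ∧
      Real.exp (n * h) ≤ E.card ∧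
      ∀ x ∈ E, ∀ f ∈ F, |∑ j ∈ Finset.range n, f (T^[j] x) - n * ∫ y, f y ∂μ| ≤ n * δ)
    {s : ℝ} (hs0 : 0 ≤ s) (hs : s < h) :
    ∃ n₀, 1 ≤ bowenH T {x | IsGeneric T μ x} s (ε / 4) n₀ := by
  classical
  obtain ⟨g, hg⟩ : ∃ g : ℕ → C(X, ℝ), DenseRange g :=
    ⟨TopologicalSpace.denseSeq _, TopologicalSpace.denseRange_denseSeq _⟩
  set r : ℕ → ℝ := fun k => ε / 8 * (1 / 2) ^ k with hr
  have hr0 : ∀ k, 0 ≤ r k := fun k => by positivity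
  have hra : Antitone r := antitone_nat_of_succ_le fun k => by
    simp only [hr, pow_succ]
    have : (0 : ℝ) ≤ ε / 8 * (1 / 2) ^ k := by positivity
    linarith
  have hrt : Tendsto r atTop (𝓝 0) := by
    simpa only [mul_zero] using (tendsto_pow_atTop_nhds_zero_of_lt_one (r := (1 / 2 : ℝ))
      (by norm_num) (by norm_num)).const_mul (ε / 8)
  have hrpos : ∀ k, 0 < r k - r (k + 1) := fun k => by
    simp only [hr, pow_succ]
    have : (0 : ℝ) < ε / 8 * (1 / 2) ^ k := by positivity
    linarith
  choose M _ hM using fun k => hspec _ (hrpos k)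
  have hM : ∀ k, SpecificationAt T (r k - r (k + 1)) (M k) := hM
  choose L hLM E hsep hcard hgen using fun k : ℕ =>
    hE ((Finset.range k).image g) (1 / (k + 1)) (by positivity) ((k + 1) * M k + 1)
  have hL : ∀ k, 0 < L k := fun k => (Nat.succ_pos _).trans_le (hLM k)
  obtain ⟨κ, hκm, hκt, hκw⟩ := exists_slow_reparametrization fun k => M k + L k
  set w : ℕ → ℕ := fun i => M (κ i) + L (κ i) with hw
  have hw0 : ∀ i, 0 < w i := fun i => by have := hL (κ i); simp only [hw]; omega
  have hwo : (fun i => (w i : ℝ)) =o[atTop] fun i => ∑ j ∈ Finset.range i, (w j : ℝ) := by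
    refine Asymptotics.isLittleO_iff.2 fun {c} hc => ?_
    filter_upwards [hκw, tendsto_natCast_atTop_atTop.eventually_ge_atTop (1 / c ^ 2)] with i h1 h2
    have h1' : ((w i : ℝ)) ^ 2 ≤ i := by exact_mod_cast h1
    have h3 : (i : ℝ) ≤ ∑ j ∈ Finset.range i, (w j : ℝ) := by exact_mod_cast le_sum_range hw0 i
    have h4 : 1 ≤ c ^ 2 * i := by rwa [div_le_iff₀' (by positivity)] at h2
    have h5 : (w i : ℝ) ≤ c * i := by
      refine le_of_sq_le_sq ?_ (by positivity)
      calc (w i : ℝ) ^ 2 ≤ i := h1'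
        _ ≤ (c ^ 2 * i) * i := le_mul_of_one_le_left (Nat.cast_nonneg i) h4
        _ = (c * i) ^ 2 := by ring
    rw [Real.norm_eq_abs, Nat.abs_cast, Real.norm_eq_abs]
    exact h5.trans (mul_le_mul_of_nonneg_left (h3.trans (le_abs_self _)) hc.le)
  have hκinv : Tendsto (fun i => 1 / ((κ i : ℝ) + 1)) atTop (𝓝 0) :=
    tendsto_one_div_add_atTop_nhds_zero_nat.comp hκt
  have hMw : (fun i => (M (κ i) : ℝ)) =o[atTop] fun i => (w i : ℝ) := by
    refine Asymptotics.isLittleO_iff.2 fun {c} hc => ?_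
    filter_upwards [hκinv.eventually_lt_const hc] with i hi
    have h1 : ((κ i : ℝ) + 1) * M (κ i) ≤ L (κ i) := by
      exact_mod_cast (Nat.le_succ _).trans (hLM (κ i))
    have h2 : (M (κ i) : ℝ) ≤ 1 / ((κ i : ℝ) + 1) * L (κ i) := by
      rw [div_mul_eq_mul_div, one_mul, le_div_iff₀ (by positivity)]
      linarith
    simp only [Real.norm_eq_abs, Nat.abs_cast]
    refine h2.trans (mul_le_mul hi.le ?_ (Nat.cast_nonneg _) hc.le)
    simp [hw]
  -- shadowing
  have hEne : ∀ k, (E k).Nonempty := fun k => by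
    rw [← Finset.card_pos]
    exact_mod_cast (Real.exp_pos _).trans_le (hcard k)
  have : ∀ i, Nonempty (E (κ i)) := fun i => (hEne _).to_subtype
  choose Φ hΦ using fun ω : ∀ i, E (κ i) => exists_shadow hT hra hr0 hL hM hκm fun i => (ω i : X)
  have hIf : ∀ f : C(X, ℝ), |∫ y, f y ∂μ| ≤ ‖f‖ := fun f => by
    have := norm_integral_le_of_norm_le_const (μ := μ) (ae_of_all _ fun x => f.norm_coe_le_norm x)
    simpa using this
  have hgeneric : ∀ ω, Φ ω ∈ {x | IsGeneric T μ x} := by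
    intro ω
    refine isGeneric_of_dense hg fun l => ?_
    set I := ∫ y, g l y ∂μ with hI
    have hb : ∀ x, |g l x - I| ≤ 2 * ‖g l‖ := fun x => by
      have := (g l).norm_coe_le_norm x
      rw [Real.norm_eq_abs] at this
      linarith [abs_sub (g l x) I, hIf (g l)]
    refine tendsto_average_of_blocks hw0 hwo (fun n => hb _) ?_
    have hsplit : ∀ i, ∑ j ∈ Finset.range (w i),
        (g l (T^[∑ j ∈ Finset.range i, w j + j] (Φ ω)) - I) =
        ∑ j ∈ Finset.range (M (κ i)), (g l (T^[∑ j ∈ Finset.range i, w j + j] (Φ ω)) - I) +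
        ∑ j ∈ Finset.range (L (κ i)),
          (g l (T^[∑ j ∈ Finset.range i, w j + (M (κ i) + j)] (Φ ω)) - I) := fun i => by
      rw [hw, Finset.sum_range_add]
    simp only [hsplit]
    refine Asymptotics.IsLittleO.add ?_ ?_
    · refine Asymptotics.IsBigO.trans_isLittleO ?_ hMw
      refine Asymptotics.IsBigO.of_bound (2 * ‖g l‖) (Eventually.of_forall fun i => ?_)
      simp only [Real.norm_eq_abs, Nat.abs_cast]
      refine (Finset.abs_sum_le_sum_abs _ _).trans ((Finset.sum_le_card_nsmul _ _ (2 * ‖g l‖)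
        fun j _ => hb _).trans_eq ?_)
      rw [Finset.card_range, nsmul_eq_mul, mul_comm]
    · refine Asymptotics.isLittleO_iff.2 fun {c} hc => ?_
      obtain ⟨ρ, hρ, hosc⟩ := exists_uniform_modulus {g l} (show 0 < c / 2 by positivity)
      filter_upwards [hκinv.eventually_lt_const (show 0 < c / 2 by positivity),
        (hrt.comp hκt).eventually_lt_const hρ, hκt.eventually_gt_atTop l] with i h1 h2 h3
      have h4 := hgen (κ i) (ω i) (ω i).2 (g l)
        (Finset.mem_image_of_mem g (Finset.mem_range.2 h3))
      have h5 : ∑ j ∈ Finset.range (L (κ i)),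
          (g l (T^[∑ j ∈ Finset.range i, w j + (M (κ i) + j)] (Φ ω)) - I) =
          ∑ j ∈ Finset.range (L (κ i)),
            (g l (T^[∑ j ∈ Finset.range i, w j + (M (κ i) + j)] (Φ ω)) - g l (T^[j] (ω i))) +
          (∑ j ∈ Finset.range (L (κ i)), g l (T^[j] (ω i)) - L (κ i) * I) := by
        simp only [Finset.sum_sub_distrib, Finset.sum_const, Finset.card_range, nsmul_eq_mul]
        ring
      have h6 : |∑ j ∈ Finset.range (L (κ i)),
          (g l (T^[∑ j ∈ Finset.range i, w j + (M (κ i) + j)] (Φ ω)) - g l (T^[j] (ω i)))| ≤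
          L (κ i) * (c / 2) := by
        refine (Finset.abs_sum_le_sum_abs _ _).trans ((Finset.sum_le_card_nsmul _ _ (c / 2)
          fun j hj => hosc _ (Finset.mem_singleton_self _) _ _ ?_).trans_eq ?_)
        · exact (hΦ ω i j (Finset.mem_range.1 hj)).trans_lt h2
        · rw [Finset.card_range, nsmul_eq_mul]
      have h7 : (L (κ i) : ℝ) * (1 / ((κ i : ℝ) + 1)) ≤ L (κ i) * (c / 2) := by gcongr
      have h8 : (L (κ i) : ℝ) ≤ w i := by simp [hw]
      rw [Real.norm_eq_abs, Real.norm_eq_abs, Nat.abs_cast, h5]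
      refine (abs_add_le _ _).trans ((add_le_add h6 (h4.trans h7)).trans ?_)
      nlinarith
  -- counting
  have hh : 0 < h := hs0.trans_lt hs
  set c := (h - s) / (2 * h) with hc
  have hc0 : 0 < c := div_pos (by linarith) (by linarith)
  have hch : c * (2 * h) = h - s := div_mul_cancel₀ _ (by linarith)
  have hMs := hMw.sum_range (fun i => Nat.cast_nonneg (w i)) (tendsto_sum_range hw0)
  obtain ⟨j₀, hj₀⟩ := eventually_atTop.1 ((hMs.bound hc0).and (hwo.bound hc0))
  refine ⟨∑ j ∈ Finset.range (j₀ + 1), w j, one_le_bowenH_of_map hgeneric fun n hn => ?_⟩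
  obtain ⟨j, hj1, hj2⟩ := exists_sum_range_le_lt hw0 n
  have hjj : j₀ ≤ j := by
    by_contra h
    have : ∑ j ∈ Finset.range (j + 1), w j ≤ ∑ j ∈ Finset.range (j₀ + 1), w j :=
      Finset.sum_le_sum_of_subset (Finset.range_mono (by omega))
    omega
  refine ⟨j, fun ω ω' hd i hi => ?_, ?_⟩
  · by_contra hne
    obtain ⟨l, hl, hdist⟩ := hsep (κ i) _ (ω i).2 _ (ω' i).2 fun h => hne (Subtype.ext h)
    have h1 := hΦ ω i l hl
    have h2 := hΦ ω' i l hl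
    have h3 : ∑ l ∈ Finset.range i, (M (κ l) + L (κ l)) + (M (κ i) + l) < n := by
      refine lt_of_lt_of_le ?_ hj1
      calc _ < ∑ l ∈ Finset.range (i + 1), w l := by
            rw [Finset.sum_range_succ]; simp only [hw]; omega
        _ ≤ _ := Finset.sum_le_sum_of_subset (Finset.range_mono hi)
    have h4 := hd _ h3
    have h5 : r (κ i) ≤ ε / 8 := (hra (Nat.zero_le _)).trans_eq (by simp [hr])
    rw [dist_comm] at h1
    have h6 := dist_triangle4 (T^[l] (ω i : X))
      (T^[∑ l ∈ Finset.range i, (M (κ l) + L (κ l)) + (M (κ i) + l)] (Φ ω))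
      (T^[∑ l ∈ Finset.range i, (M (κ l) + L (κ l)) + (M (κ i) + l)] (Φ ω'))
      (T^[l] (ω' i : X))
    linarith
  · obtain ⟨h1, h2⟩ := hj₀ j hjj
    set t := ∑ j ∈ Finset.range j, (w j : ℝ) with ht
    have ht0 : 0 ≤ t := Finset.sum_nonneg fun i _ => Nat.cast_nonneg _
    rw [Real.norm_eq_abs, Real.norm_eq_abs, abs_of_nonneg ht0] at h1 h2
    have h3 := (le_abs_self _).trans h1
    have h4 := (le_abs_self _).trans h2
    have h5 : (n : ℝ) ≤ t + w j := by
      rw [ht, ← Finset.sum_range_succ]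
      exact_mod_cast hj2.le
    have h6 : t = ∑ i ∈ Finset.range j, (M (κ i) : ℝ) + ∑ i ∈ Finset.range j, (L (κ i) : ℝ) := by
      rw [ht, ← Finset.sum_add_distrib]
      simp [hw]
    calc Real.exp (s * n) ≤ Real.exp (∑ i ∈ Finset.range j, L (κ i) * h) := by
          rw [Real.exp_le_exp, ← Finset.sum_mul]
          have h7 : s * n ≤ s * (t + c * t) := by gcongr; linarith
          have h8 : (t - c * t) * h ≤ (∑ i ∈ Finset.range j, (L (κ i) : ℝ)) * h := by
            gcongr; linarith
          have h9 : 0 ≤ c * t * (h - s) := mul_nonneg (mul_nonneg hc0.le ht0) (by linarith)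
          nlinarith
      _ = ∏ i ∈ Finset.range j, Real.exp (L (κ i) * h) := Real.exp_sum _ _
      _ ≤ _ := by
          refine Finset.prod_le_prod (fun _ _ => (Real.exp_pos _).le) fun i _ => ?_
          rw [Fintype.card_coe]
          exact hcard _

theorem ksEntropy_le_bowenEntropy_isGeneric [MetricSpace X] [CompactSpace X] [MeasurableSpace X]
    [BorelSpace X] {T : X → X} (hT : Continuous T) (hspec : SpecificationProperty T)
    {μ : Measure X} [IsProbabilityMeasure μ] (hμ : MeasurePreserving T μ μ) :
    ksEntropy T μ ≤ bowenEntropy T {x | IsGeneric T μ x} := by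
  refine iSup_le fun P => iSup₂_le fun hP hfin => le_of_forall_lt_imp_le_of_dense fun c hc => ?_
  obtain ⟨d, hcd, hd⟩ := exists_between hc
  lift d to ℝ≥0 using (hd.trans_le le_top).ne
  lift c to ℝ≥0 using (hcd.trans_le le_top).ne
  rw [ENNReal.coe_lt_coe] at hcd
  obtain ⟨K, hK⟩ := hfin.bddAbove
  have hK' : ∀ x, P x < K + 1 := fun x => Nat.lt_succ_of_le (hK (mem_range_self x))
  let Q : X → Fin (K + 1) := fun x => ⟨P x, hK' x⟩
  have hQ : Measurable Q := by
    refine measurable_to_countable' fun a => ?_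
    have : Q ⁻¹' {a} = P ⁻¹' {(a : ℕ)} := by
      ext x
      simp [Q, Fin.ext_iff]
    rw [this]
    exact hP (measurableSet_singleton _)
  obtain ⟨ε, hε, hE⟩ := exists_separated_family hspec hμ hQ
    (show ((c : ℝ) + d) / 2 < d by linarith [NNReal.coe_lt_coe.2 hcd]) (by
      filter_upwards [eventually_lt_of_lt_liminf hd, eventually_gt_atTop 0] with m hm hm0
      have h1 : partInfo T μ P m = ENNReal.ofReal (∑ w : Fin m → Fin (K + 1),
        Real.negMulLog (μ.real (word T Q m ⁻¹' {w}))) := partInfo_eq_sum_word T μ Q m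
      have h2 : 0 ≤ ∑ w : Fin m → Fin (K + 1), Real.negMulLog (μ.real (word T Q m ⁻¹' {w})) :=
        Finset.sum_nonneg fun w _ => Real.negMulLog_nonneg measureReal_nonneg measureReal_le_one
      rw [h1, ENNReal.lt_div_iff_mul_lt (by left; simp; omega) (by simp)] at hm
      rw [← ENNReal.ofReal_coe_nnreal, ← ENNReal.ofReal_natCast, ← ENNReal.ofReal_mul d.coe_nonneg] at hm
      have := (ENNReal.ofReal_le_ofReal_iff h2).1 hm.le
      rwa [mul_comm])
  refine le_trans ?_ (le_iSup₂ (ε / 4) (by positivity))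
  refine le_sInf ?_
  rintro _ ⟨s, hs, rfl⟩
  by_contra hlt
  push Not at hlt
  rw [ENNReal.coe_lt_coe] at hlt
  have h1 := NNReal.coe_lt_coe.2 hlt
  have h2 := NNReal.coe_lt_coe.2 hcd
  obtain ⟨n₀, hn₀⟩ := exists_one_le_bowenH hT hspec hε hE s.2
    (show (s : ℝ) < (c + d) / 2 by linarith)
  have h3 := (hn₀.trans (le_iSup (fun n => bowenH T {x | IsGeneric T μ x} (s : ℝ) (ε / 4) n) n₀))
  rw [hs] at h3
  simp at h3

/-- **Theorem (Fan–Liao–Peyrière).** If a dynamical system `(X,T)` on a compact metric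
space satisfies the specification property, then it is saturated: for every `T`-invariant
Borel probability measure `μ`, the Bowen topological entropy of the set of `μ`-generic
points equals the measure-theoretic entropy of `μ`. -/
theorem specification_implies_saturated {X : Type*} [MetricSpace X] [CompactSpace X]
    [MeasurableSpace X] [BorelSpace X] (T : X → X) (hT : Continuous T)
    (hspec : SpecificationProperty T) : Saturated T := by
  intro μ _ hμ
  exact le_antisymm (bowenEntropy_isGeneric_le hT hμ)
    (ksEntropy_le_bowenEntropy_isGeneric hT hspec hμ)
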